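/- arXiv:1811.07735 — 2 statements merged into one kernel-verified Lean document; each statement's English description precedes it below -/
import Mathlib

section
/- Let d ≥ 3, let ν be an integer with 1 ≤ ν ≤ d−2, and let A, B ∈ ℂ[x,y] be homogeneous of degree d without common factor such that every linear factor of D = (∂A/∂x)(∂B/∂y) − (∂A/∂y)(∂B/∂x) divides C = xA + yB (i.e. ω = A dx + B dy defines a convex homogeneous foliation of degree d). Then D = c·ℓ₁^{ν}ℓ₂^{d−ν−1}ℓ₃^{d−1} for some c ∈ ℂ∖{0} and pairwise non-proportional linear forms ℓ₁, ℓ₂, ℓ₃ (i.e. the foliation has type 1·R_ν + 1·R_{d−ν−1} + 1·R_{d−1}) if and only if ω is linearly conjugate to ω₃^{d,ν} = (Σ_{i=ν+1}^{d} binom(d,i) x^{d−i}y^{i}) dx − (Σ_{i=0}^{ν} binom(d,i) x^{d−i}y^{i}) dy. -/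
open MvPolynomial

noncomputable section

/-- Polynomials in two variables `x = X 0`, `y = X 1` over `ℂ`. -/
abbrev P2 : Type := MvPolynomial (Fin 2) ℂ

/-- The inflection polynomial `D_ω = A_x B_y - A_y B_x` of `ω = A dx + B dy`. -/
def Dpoly (A B : P2) : P2 :=
  pderiv 0 A * pderiv 1 B - pderiv 1 A * pderiv 0 B

/-- The tangent cone `C_ω = xA + yB` of `ω = A dx + B dy`. -/
def Cpoly (A B : P2) : P2 := X 0 * A + X 1 * B

/-- `A` and `B` have no common (non-unit) factor. -/
def NoCommonFactor (A B : P2) : Prop := ∀ p : P2, p ∣ A → p ∣ B → IsUnit p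

/-- Convexity: every linear factor of `D_ω` divides `C_ω`. -/
def IsConvexPair (A B : P2) : Prop :=
  ∀ l : P2, l.IsHomogeneous 1 → l ≠ 0 → l ∣ Dpoly A B → l ∣ Cpoly A B

/-- Composition of a polynomial with the linear map `φ(x,y) = (a₁x + a₂y, a₃x + a₄y)`. -/
def comp2 (a₁ a₂ a₃ a₄ : ℂ) (p : P2) : P2 :=
  aeval ![C a₁ * X 0 + C a₂ * X 1, C a₃ * X 0 + C a₄ * X 1] p

/-- `ω = A dx + B dy` is linearly conjugate to `ω' = A' dx + B' dy`:
`φ*ω = λ ω'` for some `φ ∈ GL₂(ℂ)` and `λ ∈ ℂ \ {0}`. -/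
def LinConj (A B A' B' : P2) : Prop :=
  ∃ a₁ a₂ a₃ a₄ lam : ℂ, a₁ * a₄ - a₂ * a₃ ≠ 0 ∧ lam ≠ 0 ∧
    C a₁ * comp2 a₁ a₂ a₃ a₄ A + C a₃ * comp2 a₁ a₂ a₃ a₄ B = C lam * A' ∧
    C a₂ * comp2 a₁ a₂ a₃ a₄ A + C a₄ * comp2 a₁ a₂ a₃ a₄ B = C lam * B'

/-- Two polynomials are proportional (one is a constant multiple of the other). -/
def Proportional (l₁ l₂ : P2) : Prop := ∃ t : ℂ, l₁ = C t * l₂ ∨ l₂ = C t * l₁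

/-- The coefficient of `dx` in `ω₃^{d,ν}`: `Σ_{i=ν+1}^{d} binom(d,i) x^{d−i} y^{i}`. -/
def A3d (d ν : ℕ) : P2 :=
  ∑ i ∈ Finset.Icc (ν + 1) d, C ((d.choose i : ℂ)) * X 0 ^ (d - i) * X 1 ^ i

/-- The coefficient of `dy` in `ω₃^{d,ν}`: `−Σ_{i=0}^{ν} binom(d,i) x^{d−i} y^{i}`. -/
def B3d (d ν : ℕ) : P2 :=
  -∑ i ∈ Finset.range (ν + 1), C ((d.choose i : ℂ)) * X 0 ^ (d - i) * X 1 ^ i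

/-!
Write `D` for the Jacobian `Dpoly A B` and `ω(u, v) = uA + vB` for the value of `ω` on a constant
vector field. If a line through the origin with direction `(u, v)` is invariant and its equation
`l` satisfies `l ^ n ∣ D`, then `l ^ (n + 1) ∣ ω(u, v)`: whenever `ω(u, v) = l ^ (k + 1) F` with
`k < n`, the Leibniz rule for the Jacobian bracket with `A` and with `B` forces `l ∣ F`, because
otherwise Euler's identity makes `l` a common factor of `A` and `B`.

Three distinct lines through the origin can be given directions `e`, `e'`, `e - e'`. In the basis
`(e, e')`, the tangency orders `ν + 1`, `d - ν` and `d` along them become `y ^ (ν + 1) ∣ A`,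
`x ^ (d - ν) ∣ B` and `(x + y) ^ d ∣ A - B`. By degree these conditions determine `(A, B)` up to a
scalar, and splitting the binomial expansion of `(x + y) ^ d` gives one solution. Conversely, `D`
is multiplied by `det ^ 2` under a linear pullback, and the Jacobian of the model is computed by a
telescoping sum.
-/

section MvPolynomial

variable {σ τ R S K : Type*} [CommRing R] [CommSemiring S] [Field K]

lemma prime_of_isHomogeneous_one {l : MvPolynomial σ K} (hl : l.IsHomogeneous 1) (h0 : l ≠ 0) :
    Prime l := by
  refine (irreducible_of_totalDegree_eq_one (hl.totalDegree h0) fun x hx ↦ ?_).prime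
  rw [isUnit_iff_ne_zero]
  rintro rfl
  exact h0 (MvPolynomial.ext _ _ fun i ↦ by simpa using hx i)

lemma isRelPrime_X {i j : σ} (hij : i ≠ j) : IsRelPrime (X i : MvPolynomial σ K) (X j) := by
  rw [(X_prime (R := K)).irreducible.isRelPrime_iff_not_dvd, X_dvd_X]
  exact hij

lemma eq_zero_of_isHomogeneous_of_dvd [IsDomain R] {p q : MvPolynomial σ R} {m n : ℕ}
    (hp : p.IsHomogeneous m) (hq : q.IsHomogeneous n) (hmn : m < n) (h : q ∣ p) : p = 0 := by
  by_contra h0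
  have hdeg := totalDegree_le_of_dvd_of_isDomain h h0
  rw [hp.totalDegree h0, hq.totalDegree (ne_zero_of_dvd_ne_zero h0 h)] at hdeg
  omega

lemma exists_eq_C_mul_of_isHomogeneous_of_dvd [IsDomain R] {p q : MvPolynomial σ R} {n : ℕ}
    (hp : p.IsHomogeneous n) (hq : q.IsHomogeneous n) (h : q ∣ p) : ∃ k : R, p = C k * q := by
  by_cases h0 : p = 0
  · exact ⟨0, by simp [h0]⟩
  obtain ⟨r, rfl⟩ := h
  have hq0 := left_ne_zero_of_mul h0
  have hdeg := hp.totalDegree h0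
  rw [totalDegree_mul_of_isDomain hq0 (right_ne_zero_of_mul h0), hq.totalDegree hq0] at hdeg
  have hr : r = C (coeff 0 r) := totalDegree_eq_zero_iff_eq_C.1 (by omega)
  exact ⟨coeff 0 r, by rw [← hr, mul_comm]⟩

lemma pderiv_bind₁ [Fintype σ] (f : σ → MvPolynomial τ S) (j : τ) (p : MvPolynomial σ S) :
    pderiv j (bind₁ f p) = ∑ i, bind₁ f (pderiv i p) * pderiv j (f i) := by
  classical
  induction p using MvPolynomial.induction_on with
  | C a => simp
  | add p q hp hq => simp only [map_add, hp, hq, add_mul, Finset.sum_add_distrib]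
  | mul_X p i hp =>
    simp [hp, pderiv_X, Pi.single_apply, apply_ite (bind₁ f), ite_mul, Finset.sum_add_distrib,
      Finset.mul_sum, add_mul, mul_assoc]

lemma bind₁_toMvPolynomial_injective [Fintype σ] [DecidableEq σ] {M : Matrix σ σ S}
    (hM : IsUnit M) : Function.Injective (bind₁ M.toMvPolynomial) := by
  obtain ⟨N, hMN⟩ := hM.exists_right_inv
  refine Function.LeftInverse.injective (g := bind₁ N.toMvPolynomial) fun p ↦ ?_
  simp only [bind₁_bind₁, ← Matrix.toMvPolynomial_mul, hMN, Matrix.toMvPolynomial_one]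
  simp

end MvPolynomial

section LineThrough

variable {R K : Type*} [CommRing R] [Field K]

/-- The linear form `u y - v x`, an equation of the line spanned by the vector `(u, v)`. Lines are
encoded by a direction rather than by their coefficients, as it is the direction that is inserted
in `ω`. -/
def lineThrough (u v : R) : MvPolynomial (Fin 2) R := C u * X 1 - C v * X 0

lemma isHomogeneous_lineThrough (u v : R) : (lineThrough u v).IsHomogeneous 1 :=
  (isHomogeneous_C_mul_X u 1).sub (isHomogeneous_C_mul_X v 0)

lemma exists_eq_lineThrough {l : MvPolynomial (Fin 2) R} (hl : l.IsHomogeneous 1) :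
    ∃ u v : R, l = lineThrough u v := by
  rw [← mem_homogeneousSubmodule, homogeneousSubmodule_one_eq_span_X,
    Submodule.mem_span_range_iff_exists_fun] at hl
  obtain ⟨c, rfl⟩ := hl
  refine ⟨c 1, -c 0, ?_⟩
  simp only [Fin.sum_univ_two, smul_eq_C_mul, lineThrough, C_neg]
  ring

@[simp]
lemma eval_lineThrough (a b u v : R) : eval ![a, b] (lineThrough u v) = u * b - a * v := by
  simp [lineThrough, mul_comm]

lemma lineThrough_mul (t u v : R) : lineThrough (t * u) (t * v) = C t * lineThrough u v := by
  simp only [lineThrough, C_mul]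
  ring

lemma associated_lineThrough_mul {t : K} (ht : t ≠ 0) (u v : K) :
    Associated (lineThrough u v) (lineThrough (t * u) (t * v)) := by
  rw [lineThrough_mul]
  exact associated_unit_mul_right _ _ ((IsUnit.mk0 t ht).map C)

lemma lineThrough_ne_zero {u v a b : R} (h : u * b - a * v ≠ 0) : lineThrough u v ≠ 0 := by
  intro h0
  apply h
  rw [← eval_lineThrough, h0, map_zero]

lemma proportional_lineThrough_iff {u v u' v' : ℂ} :
    Proportional (lineThrough u v) (lineThrough u' v') ↔ u * v' - u' * v = 0 := by
  constructor
  · rintro ⟨t, h | h⟩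
    · simpa [mul_comm] using congrArg (eval ![u', v']) h
    · have := congrArg (eval ![u, v]) h
      simp only [eval_lineThrough, map_mul, eval_C] at this
      linear_combination -this
  · intro h
    by_cases hu : u' = 0
    · by_cases hv : v' = 0
      · exact ⟨0, Or.inr (by simp [lineThrough, hu, hv])⟩
      · refine ⟨v / v', Or.inl ?_⟩
        rw [← lineThrough_mul, div_mul_cancel₀ v hv]
        congr 1
        field_simp
        linear_combination h
    · refine ⟨u / u', Or.inl ?_⟩
      rw [← lineThrough_mul, div_mul_cancel₀ u hu]
      congr 1
      field_simp
      linear_combination -h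

lemma lineThrough_triple_ne_zero {u v u' v' : R} (hdet : u * v' - u' * v ≠ 0) :
    lineThrough u v ≠ 0 ∧ lineThrough u' v' ≠ 0 ∧ lineThrough (u - u') (v - v') ≠ 0 := by
  refine ⟨lineThrough_ne_zero hdet, lineThrough_ne_zero (a := u) (b := v) ?_,
    lineThrough_ne_zero (a := u') (b := v') ?_⟩
  · rwa [← neg_sub, neg_ne_zero]
  · convert hdet using 1
    ring

lemma lineThrough_triple_not_proportional {u v u' v' : ℂ} (hdet : u * v' - u' * v ≠ 0) :
    ¬ Proportional (lineThrough u v) (lineThrough u' v') ∧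
      ¬ Proportional (lineThrough u v) (lineThrough (u - u') (v - v')) ∧
      ¬ Proportional (lineThrough u' v') (lineThrough (u - u') (v - v')) := by
  simp only [proportional_lineThrough_iff]
  refine ⟨hdet, fun h ↦ hdet ?_, fun h ↦ hdet ?_⟩ <;> linear_combination -h

lemma exists_associated_lineThrough_sub {l₁ l₂ l₃ : P2} (hl₁ : l₁.IsHomogeneous 1)
    (hl₂ : l₂.IsHomogeneous 1) (hl₃ : l₃.IsHomogeneous 1) (h₁₂ : ¬ Proportional l₁ l₂)
    (h₁₃ : ¬ Proportional l₁ l₃) (h₂₃ : ¬ Proportional l₂ l₃) :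
    ∃ u v u' v' : ℂ, u * v' - u' * v ≠ 0 ∧ Associated l₁ (lineThrough u v) ∧
      Associated l₂ (lineThrough u' v') ∧ l₃ = lineThrough (u - u') (v - v') := by
  obtain ⟨u₁, v₁, rfl⟩ := exists_eq_lineThrough hl₁
  obtain ⟨u₂, v₂, rfl⟩ := exists_eq_lineThrough hl₂
  obtain ⟨u₃, v₃, rfl⟩ := exists_eq_lineThrough hl₃
  rw [proportional_lineThrough_iff] at h₁₂ h₁₃ h₂₃
  -- Cramer's rule: `(u₃, v₃) = α (u₁, v₁) - β (u₂, v₂)`.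
  set α := -(u₂ * v₃ - u₃ * v₂) / (u₁ * v₂ - u₂ * v₁) with hα
  set β := -(u₁ * v₃ - u₃ * v₁) / (u₁ * v₂ - u₂ * v₁) with hβ
  have hα0 : α ≠ 0 := div_ne_zero (neg_ne_zero.2 h₂₃) h₁₂
  have hβ0 : β ≠ 0 := div_ne_zero (neg_ne_zero.2 h₁₃) h₁₂
  refine ⟨α * u₁, α * v₁, β * u₂, β * v₂, ?_, associated_lineThrough_mul hα0 _ _,
    associated_lineThrough_mul hβ0 _ _, ?_⟩
  · convert mul_ne_zero (mul_ne_zero hα0 hβ0) h₁₂ using 1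
    ring
  · congr 1 <;> rw [hα, hβ, div_mul_eq_mul_div, div_mul_eq_mul_div, ← sub_div, eq_div_iff h₁₂] <;>
      ring

end LineThrough

section Jacobian

lemma Dpoly_lineThrough (u v : ℂ) (G : P2) :
    Dpoly (lineThrough u v) G = -(C u * pderiv 0 G + C v * pderiv 1 G) := by
  simp only [Dpoly, lineThrough, map_sub, pderiv_C_mul, pderiv_X_self,
    pderiv_X_of_ne zero_ne_one, pderiv_X_of_ne one_ne_zero]
  ring

lemma Dpoly_pow_succ_mul (l F G : P2) (k : ℕ) :
    Dpoly (l ^ (k + 1) * F) G = l ^ k * (l * Dpoly F G + C (k + 1 : ℂ) * (F * Dpoly l G)) := by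
  simp only [Dpoly, pderiv_mul, pderiv_pow, Nat.add_sub_cancel, Nat.cast_add, Nat.cast_one, C_add,
    C_1, map_natCast]
  ring

lemma Dpoly_C_mul_C_mul (a b : ℂ) (F G : P2) :
    Dpoly (C a * F) (C b * G) = C (a * b) * Dpoly F G := by
  simp only [Dpoly, pderiv_C_mul, C_mul]
  ring

lemma dvd_mul_Dpoly_of_pow_succ_dvd {l F G : P2} (hl : l ≠ 0) {k : ℕ}
    (h : l ^ (k + 1) ∣ Dpoly (l ^ (k + 1) * F) G) : l ∣ F * Dpoly l G := by
  have hk : IsUnit (C (k + 1 : ℂ) : P2) := (IsUnit.mk0 _ k.cast_add_one_ne_zero).map C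
  rw [Dpoly_pow_succ_mul, pow_succ, mul_dvd_mul_iff_left (pow_ne_zero k hl),
    dvd_add_right (dvd_mul_right _ _), hk.dvd_mul_left] at h
  exact h

lemma lineThrough_dvd_of_dvd_Dpoly {d : ℕ} (hd : d ≠ 0) {G : P2} (hG : G.IsHomogeneous d)
    {u v : ℂ} (hl : lineThrough u v ≠ 0) (h : lineThrough u v ∣ Dpoly (lineThrough u v) G) :
    lineThrough u v ∣ G := by
  rw [Dpoly_lineThrough, dvd_neg] at h
  have euler : X 0 * pderiv 0 G + X 1 * pderiv 1 G = C (d : ℂ) * G := by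
    simpa using hG.sum_X_mul_pderiv
  have dvd_of_mul {t : ℂ} (ht : t ≠ 0) (hG' : lineThrough u v ∣ C t * (C (d : ℂ) * G)) :
      lineThrough u v ∣ G := by
    have htd : IsUnit (C (t * d) : P2) :=
      (IsUnit.mk0 _ (mul_ne_zero ht (Nat.cast_ne_zero.2 hd))).map C
    rwa [← mul_assoc, ← C_mul, htd.dvd_mul_left] at hG'
  have hu : lineThrough u v ∣ C u * (C (d : ℂ) * G) := by
    convert (h.mul_left (X 0)).add (dvd_mul_right (lineThrough u v) (pderiv 1 G)) using 1
    rw [← euler, lineThrough]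
    ring
  have hv : lineThrough u v ∣ C v * (C (d : ℂ) * G) := by
    convert (h.mul_left (X 1)).sub (dvd_mul_right (lineThrough u v) (pderiv 0 G)) using 1
    rw [← euler, lineThrough]
    ring
  by_cases hu0 : u = 0
  · by_cases hv0 : v = 0
    · simp [lineThrough, hu0, hv0] at hl
    · exact dvd_of_mul hv0 hv
  · exact dvd_of_mul hu0 hu

end Jacobian

section Tangency

/-- The value `uA + vB` of the 1-form `A dx + B dy` on the constant vector field `(u, v)`. -/
def contract (A B : P2) (u v : ℂ) : P2 := C u * A + C v * B

variable {A B : P2} {d : ℕ} {u v : ℂ}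

lemma isHomogeneous_contract (hA : A.IsHomogeneous d) (hB : B.IsHomogeneous d) (u v : ℂ) :
    (contract A B u v).IsHomogeneous d :=
  (hA.C_mul u).add (hB.C_mul v)

lemma contract_sub (A B : P2) (u v u' v' : ℂ) :
    contract A B (u - u') (v - v') = contract A B u v - contract A B u' v' := by
  simp only [contract, C_sub]
  ring

lemma Dpoly_contract (A B : P2) (u v u' v' : ℂ) :
    Dpoly (contract A B u v) (contract A B u' v') = C (u * v' - u' * v) * Dpoly A B := by
  simp only [Dpoly, contract, map_add, pderiv_C_mul, C_sub, C_mul]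
  ring

lemma Dpoly_contract_left (A B : P2) (u v : ℂ) :
    Dpoly (contract A B u v) A = -C v * Dpoly A B := by
  simpa [contract] using Dpoly_contract A B u v 1 0

lemma Dpoly_contract_right (A B : P2) (u v : ℂ) :
    Dpoly (contract A B u v) B = C u * Dpoly A B := by
  simpa [contract] using Dpoly_contract A B u v 0 1

lemma eq_zero_of_contract_eq_zero {u' v' : ℂ} (hdet : u * v' - u' * v ≠ 0)
    (h : contract A B u v = 0) (h' : contract A B u' v' = 0) : A = 0 ∧ B = 0 := by
  have hC : (C (u * v' - u' * v) : P2) ≠ 0 := C_ne_zero.2 hdet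
  rw [contract] at h h'
  constructor
  · refine (mul_eq_zero.1 ?_).resolve_left hC
    simp only [C_sub, C_mul]
    linear_combination C v' * h - C v * h'
  · refine (mul_eq_zero.1 ?_).resolve_left hC
    simp only [C_sub, C_mul]
    linear_combination C u * h' - C u' * h

lemma lineThrough_dvd_contract (hl : lineThrough u v ≠ 0) (hC : lineThrough u v ∣ Cpoly A B) :
    lineThrough u v ∣ contract A B u v := by
  have hprime := prime_of_isHomogeneous_one (isHomogeneous_lineThrough u v) hl
  have h0 : lineThrough u v ∣ X 0 * contract A B u v := by
    convert (hC.mul_left (C u)).sub (dvd_mul_right (lineThrough u v) B) using 1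
    simp only [Cpoly, contract, lineThrough]
    ring
  have h1 : lineThrough u v ∣ X 1 * contract A B u v := by
    convert (hC.mul_left (C v)).add (dvd_mul_right (lineThrough u v) A) using 1
    simp only [Cpoly, contract, lineThrough]
    ring
  by_contra hndvd
  exact hprime.not_isUnit <| isRelPrime_X zero_ne_one
    ((hprime.dvd_or_dvd h0).resolve_right hndvd) ((hprime.dvd_or_dvd h1).resolve_right hndvd)

lemma lineThrough_pow_succ_dvd_contract (hd : d ≠ 0) (hA : A.IsHomogeneous d)
    (hB : B.IsHomogeneous d) (hcop : NoCommonFactor A B) (hl : lineThrough u v ≠ 0)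
    (hC : lineThrough u v ∣ Cpoly A B) {n : ℕ} (hD : lineThrough u v ^ n ∣ Dpoly A B) :
    lineThrough u v ^ (n + 1) ∣ contract A B u v := by
  have hprime := prime_of_isHomogeneous_one (isHomogeneous_lineThrough u v) hl
  induction n with
  | zero => simpa using lineThrough_dvd_contract hl hC
  | succ k ih =>
    obtain ⟨F, hF⟩ := ih ((pow_dvd_pow _ k.le_succ).trans hD)
    have hFA : lineThrough u v ∣ F * Dpoly (lineThrough u v) A :=
      dvd_mul_Dpoly_of_pow_succ_dvd hl <| by
        rw [← hF, Dpoly_contract_left]; exact hD.mul_left _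
    have hFB : lineThrough u v ∣ F * Dpoly (lineThrough u v) B :=
      dvd_mul_Dpoly_of_pow_succ_dvd hl <| by
        rw [← hF, Dpoly_contract_right]; exact hD.mul_left _
    have hdvdF : lineThrough u v ∣ F := by
      by_contra hndvd
      have hlA := (hprime.dvd_or_dvd hFA).resolve_left hndvd
      have hlB := (hprime.dvd_or_dvd hFB).resolve_left hndvd
      exact hprime.not_isUnit <| hcop _ (lineThrough_dvd_of_dvd_Dpoly hd hA hl hlA)
        (lineThrough_dvd_of_dvd_Dpoly hd hB hl hlB)
    rw [hF, pow_succ _ (k + 1)]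
    exact mul_dvd_mul_left _ hdvdF

end Tangency

section Substitution

/-- The substitution `comp2` as a homomorphism of algebras. The parameters are arranged so that
`(u, v)` and `(u', v')` are the images of the coordinate vector fields. -/
def comp2Hom (u u' v v' : ℂ) : P2 →ₐ[ℂ] P2 :=
  bind₁ ![C u * X 0 + C u' * X 1, C v * X 0 + C v' * X 1]

variable {u u' v v' : ℂ}

@[simp]
lemma comp2Hom_C (u u' v v' c : ℂ) : comp2Hom u u' v v' (C c) = C c :=
  bind₁_C_right _ c

lemma comp2Hom_injective (hdet : u * v' - u' * v ≠ 0) :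
    Function.Injective (comp2Hom u u' v v') := by
  have hM : IsUnit !![u, u'; v, v'] := by
    rw [Matrix.isUnit_iff_isUnit_det, Matrix.det_fin_two_of]
    exact IsUnit.mk0 _ hdet
  convert bind₁_toMvPolynomial_injective hM using 2
  rw [comp2Hom]
  congr 1
  ext1 i
  fin_cases i <;> simp [Matrix.toMvPolynomial, C_mul_X_eq_monomial]

lemma isHomogeneous_comp2Hom {d : ℕ} {p : P2} (hp : p.IsHomogeneous d) (u u' v v' : ℂ) :
    (comp2Hom u u' v v' p).IsHomogeneous d := by
  rw [← one_mul d]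
  refine hp.aeval _ fun i ↦ ?_
  fin_cases i
  · exact (isHomogeneous_C_mul_X u 0).add (isHomogeneous_C_mul_X u' 1)
  · exact (isHomogeneous_C_mul_X v 0).add (isHomogeneous_C_mul_X v' 1)

lemma Dpoly_comp2Hom (u u' v v' : ℂ) (F G : P2) :
    Dpoly (comp2Hom u u' v v' F) (comp2Hom u u' v v' G) =
      C (u * v' - u' * v) * comp2Hom u u' v v' (Dpoly F G) := by
  simp only [Dpoly, comp2Hom, pderiv_bind₁, Fin.sum_univ_two, Matrix.cons_val_zero,
    Matrix.cons_val_one, map_add, map_sub, map_mul, pderiv_C_mul, pderiv_X_self,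
    pderiv_X_of_ne zero_ne_one, pderiv_X_of_ne one_ne_zero]
  ring

lemma comp2Hom_lineThrough (u u' v v' a b : ℂ) :
    comp2Hom u u' v v' (lineThrough a b) =
      C a * (C v * X 0 + C v' * X 1) - C b * (C u * X 0 + C u' * X 1) := by
  simp [comp2Hom, lineThrough]

lemma comp2Hom_lineThrough_left (u u' v v' : ℂ) :
    comp2Hom u u' v v' (lineThrough u v) = C (u * v' - u' * v) * X 1 := by
  simp only [comp2Hom_lineThrough, C_sub, C_mul]
  ring

lemma comp2Hom_lineThrough_right (u u' v v' : ℂ) :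
    comp2Hom u u' v v' (lineThrough u' v') = C (-(u * v' - u' * v)) * X 0 := by
  simp only [comp2Hom_lineThrough, C_neg, C_sub, C_mul]
  ring

lemma comp2Hom_lineThrough_sub (u u' v v' : ℂ) :
    comp2Hom u u' v v' (lineThrough (u - u') (v - v')) =
      C (u * v' - u' * v) * (X 0 + X 1) := by
  simp only [comp2Hom_lineThrough, C_sub, C_mul]
  ring

lemma linConj_iff {A B A' B' : P2} :
    LinConj A B A' B' ↔ ∃ u u' v v' lam : ℂ, u * v' - u' * v ≠ 0 ∧ lam ≠ 0 ∧
      comp2Hom u u' v v' (contract A B u v) = C lam * A' ∧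
      comp2Hom u u' v v' (contract A B u' v') = C lam * B' := by
  simp only [LinConj, contract, map_add, map_mul, comp2Hom_C]
  rfl

end Substitution

section Model

variable {d ν : ℕ}

lemma isHomogeneous_binomialTerm {R : Type*} [CommSemiring R] (c : R) {i : ℕ} (hi : i ≤ d) :
    (C c * X 0 ^ (d - i) * X 1 ^ i : MvPolynomial (Fin 2) R).IsHomogeneous d := by
  have h := (((isHomogeneous_X_pow (R := R) (0 : Fin 2) (d - i)).C_mul c)).mul
    (isHomogeneous_X_pow (1 : Fin 2) i)
  rwa [Nat.sub_add_cancel hi] at h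

lemma isHomogeneous_A3d (d ν : ℕ) : (A3d d ν).IsHomogeneous d :=
  IsHomogeneous.sum _ _ _ fun _ hi ↦ isHomogeneous_binomialTerm _ (Finset.mem_Icc.1 hi).2

lemma X_one_pow_dvd_A3d (d ν : ℕ) : (X 1 : P2) ^ (ν + 1) ∣ A3d d ν :=
  Finset.dvd_sum fun _ hi ↦ (pow_dvd_pow _ (Finset.mem_Icc.1 hi).1).mul_left _

lemma X_zero_pow_dvd_B3d (d ν : ℕ) : (X 0 : P2) ^ (d - ν) ∣ B3d d ν := by
  refine dvd_neg.2 (Finset.dvd_sum fun i hi ↦ ?_)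
  have hiν : i ≤ ν := Finset.mem_range_succ_iff.1 hi
  exact ((pow_dvd_pow _ (by omega)).mul_left _).mul_right _

lemma A3d_sub_B3d (hν : ν ≤ d) : A3d d ν - B3d d ν = (X 0 + X 1) ^ d := by
  rw [A3d, B3d, sub_neg_eq_add, add_comm, ← Finset.Ico_succ_right_eq_Icc,
    Finset.sum_range_add_sum_Ico _ (by simpa using hν), add_comm (X 0), add_pow]
  exact Finset.sum_congr rfl fun i _ ↦ by rw [map_natCast]; ring

lemma exists_eq_C_mul_A3d_B3d {A B : P2} (hν : ν ≤ d) (hA : A.IsHomogeneous d)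
    (hB : B.IsHomogeneous d) (hyA : X 1 ^ (ν + 1) ∣ A) (hxB : X 0 ^ (d - ν) ∣ B)
    (hxy : (X 0 + X 1) ^ d ∣ A - B) :
    ∃ k : ℂ, A = C k * A3d d ν ∧ B = C k * B3d d ν := by
  have hpow : ((X 0 + X 1 : P2) ^ d).IsHomogeneous d := by
    simpa using ((isHomogeneous_X ℂ (0 : Fin 2)).add (isHomogeneous_X ℂ 1)).pow d
  obtain ⟨k, hk⟩ := exists_eq_C_mul_of_isHomogeneous_of_dvd (hA.sub hB) hpow hxy
  rw [← A3d_sub_B3d hν] at hk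
  have hAB : A - C k * A3d d ν = B - C k * B3d d ν := by linear_combination hk
  have hy : X 1 ^ (ν + 1) ∣ A - C k * A3d d ν :=
    dvd_sub hyA ((X_one_pow_dvd_A3d d ν).mul_left _)
  have hx : X 0 ^ (d - ν) ∣ A - C k * A3d d ν :=
    hAB ▸ dvd_sub hxB ((X_zero_pow_dvd_B3d d ν).mul_left _)
  have hprod : (X 1 ^ (ν + 1) * X 0 ^ (d - ν) : P2).IsHomogeneous (ν + 1 + (d - ν)) :=
    (isHomogeneous_X_pow 1 _).mul (isHomogeneous_X_pow 0 _)
  have hrel : IsRelPrime (X 1 : P2) (X 0) := isRelPrime_X one_ne_zero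
  have hzero : A - C k * A3d d ν = 0 :=
    eq_zero_of_isHomogeneous_of_dvd (hA.sub ((isHomogeneous_A3d d ν).C_mul k)) hprod (by omega)
      (hrel.pow.mul_dvd hy hx)
  exact ⟨k, sub_eq_zero.1 hzero, sub_eq_zero.1 (hAB ▸ hzero)⟩

lemma B3d_succ (d ν : ℕ) : B3d d (ν + 1) =
    B3d d ν - C (d.choose (ν + 1) : ℂ) * X 0 ^ (d - (ν + 1)) * X 1 ^ (ν + 1) := by
  rw [B3d, Finset.sum_range_succ, neg_add, ← sub_eq_add_neg, B3d]

lemma pderiv_one_sub_pderiv_zero_B3d (n ν : ℕ) :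
    pderiv 1 (B3d (n + 1) ν) - pderiv 0 (B3d (n + 1) ν) =
      C ((n + 1) * n.choose ν : ℂ) * X 0 ^ (n - ν) * X 1 ^ ν := by
  induction ν with
  | zero => simp [B3d, pderiv_X]
  | succ ν ih =>
    have hy : ((n + 1).choose (ν + 1) * (ν + 1) : P2) = (n + 1) * n.choose ν :=
      mod_cast (Nat.add_one_mul_choose_eq n ν).symm
    have hx : ((n + 1).choose (ν + 1) * (n - ν : ℕ) : P2) = (n + 1) * n.choose (ν + 1) := by
      have := Nat.choose_mul_succ_eq n (ν + 1)
      rw [Nat.add_sub_add_right, mul_comm] at this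
      exact mod_cast this.symm
    rw [B3d_succ, map_sub, map_sub, sub_sub_sub_comm, ih, Nat.add_sub_add_right]
    simp only [C_mul, C_add, C_1, map_natCast, pderiv_mul, pderiv_pow, Derivation.map_natCast,
      pderiv_X_self, pderiv_X_of_ne zero_ne_one, pderiv_X_of_ne one_ne_zero, ← Nat.sub_sub,
      Nat.add_sub_cancel, Nat.cast_add, Nat.cast_one]
    linear_combination X 0 ^ (n - ν - 1) * X 1 ^ (ν + 1) * hx - X 0 ^ (n - ν) * X 1 ^ ν * hy

lemma Dpoly_A3d_B3d (hν : ν < d) :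
    Dpoly (A3d d ν) (B3d d ν) =
      C (d ^ 2 * (d - 1).choose ν : ℂ) *
        (X 1 ^ ν * X 0 ^ (d - ν - 1) * (X 0 + X 1) ^ (d - 1)) := by
  obtain ⟨n, rfl⟩ := Nat.exists_eq_add_one_of_ne_zero (Nat.ne_zero_of_lt hν)
  have hB := pderiv_one_sub_pderiv_zero_B3d n ν
  have hA : A3d (n + 1) ν = B3d (n + 1) ν + (X 0 + X 1) ^ (n + 1) :=
    eq_add_of_sub_eq' (A3d_sub_B3d hν.le)
  rw [show n + 1 - ν - 1 = n - ν by omega, Dpoly, hA]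
  simp only [map_add, pderiv_pow, pderiv_X_self, pderiv_X_of_ne zero_ne_one,
    pderiv_X_of_ne one_ne_zero, Nat.add_sub_cancel, Nat.cast_add, Nat.cast_one, C_mul, C_1, C_pow,
    map_natCast] at hB ⊢
  linear_combination (n + 1 : P2) * (X 0 + X 1) ^ n * hB

end Model

section Classification

variable {A B : P2} {d ν : ℕ}

lemma linConj_of_pow_dvd_contract (hν : ν ≤ d) (hA : A.IsHomogeneous d) (hB : B.IsHomogeneous d)
    (hcop : NoCommonFactor A B) {u v u' v' : ℂ} (hdet : u * v' - u' * v ≠ 0)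
    (h : lineThrough u v ^ (ν + 1) ∣ contract A B u v)
    (h' : lineThrough u' v' ^ (d - ν) ∣ contract A B u' v')
    (hsub : lineThrough (u - u') (v - v') ^ d ∣ contract A B (u - u') (v - v')) :
    LinConj A B (A3d d ν) (B3d d ν) := by
  have of_C_mul {t : ℂ} {l p : P2} {n : ℕ} (hlp : (C t * l) ^ n ∣ p) : l ^ n ∣ p :=
    (pow_dvd_pow_of_dvd (dvd_mul_left l (C t)) n).trans hlp
  replace h := map_dvd (comp2Hom u u' v v') h
  replace h' := map_dvd (comp2Hom u u' v v') h'
  replace hsub := map_dvd (comp2Hom u u' v v') hsub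
  rw [map_pow, comp2Hom_lineThrough_left] at h
  rw [map_pow, comp2Hom_lineThrough_right] at h'
  rw [map_pow, comp2Hom_lineThrough_sub, contract_sub, map_sub (comp2Hom u u' v v')] at hsub
  have hom (a b : ℂ) := isHomogeneous_comp2Hom (isHomogeneous_contract hA hB a b) u u' v v'
  obtain ⟨k, hk, hk'⟩ := exists_eq_C_mul_A3d_B3d hν (hom u v) (hom u' v')
    (of_C_mul h) (of_C_mul h') (of_C_mul hsub)
  refine linConj_iff.2 ⟨u, u', v, v', k, hdet, ?_, hk, hk'⟩
  rintro rfl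
  rw [C_0, zero_mul, map_eq_zero_iff _ (comp2Hom_injective hdet)] at hk hk'
  obtain ⟨rfl, rfl⟩ := eq_zero_of_contract_eq_zero hdet hk hk'
  exact not_isUnit_zero (hcop 0 (dvd_zero _) (dvd_zero _))

lemma linConj_of_pow_dvd_Dpoly (hν0 : ν ≠ 0) (hν : ν + 1 < d) (hA : A.IsHomogeneous d)
    (hB : B.IsHomogeneous d) (hcop : NoCommonFactor A B) (hconv : IsConvexPair A B)
    {u v u' v' : ℂ} (hdet : u * v' - u' * v ≠ 0) (h : lineThrough u v ^ ν ∣ Dpoly A B)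
    (h' : lineThrough u' v' ^ (d - ν - 1) ∣ Dpoly A B)
    (hsub : lineThrough (u - u') (v - v') ^ (d - 1) ∣ Dpoly A B) :
    LinConj A B (A3d d ν) (B3d d ν) := by
  have tangency {a b : ℂ} (hl : lineThrough a b ≠ 0) {n : ℕ} (hn : n ≠ 0)
      (hD : lineThrough a b ^ n ∣ Dpoly A B) : lineThrough a b ^ (n + 1) ∣ contract A B a b :=
    lineThrough_pow_succ_dvd_contract (by omega) hA hB hcop hl
      (hconv _ (isHomogeneous_lineThrough a b) hl ((dvd_pow_self _ hn).trans hD)) hD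
  obtain ⟨hl, hl', hlsub⟩ := lineThrough_triple_ne_zero hdet
  refine linConj_of_pow_dvd_contract (by omega) hA hB hcop hdet (tangency hl hν0 h) ?_ ?_
  · convert tangency hl' (by omega) h' using 2
    omega
  · convert tangency hlsub (by omega) hsub using 2
    omega

lemma comp2Hom_lineThrough_pow_mul (u u' v v' : ℂ) (i j k : ℕ) :
    comp2Hom u u' v v'
        (lineThrough u v ^ i * lineThrough u' v' ^ j * lineThrough (u - u') (v - v') ^ k) =
      C ((u * v' - u' * v) ^ i * (-(u * v' - u' * v)) ^ j * (u * v' - u' * v) ^ k) *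
        (X 1 ^ i * X 0 ^ j * (X 0 + X 1) ^ k) := by
  simp only [map_mul (comp2Hom u u' v v'), map_pow (comp2Hom u u' v v'),
    comp2Hom_lineThrough_left, comp2Hom_lineThrough_right, comp2Hom_lineThrough_sub, mul_pow,
    C_mul, C_pow]
  ring

lemma C_det_sq_mul_comp2Hom_Dpoly {A' B' : P2} {u u' v v' lam : ℂ}
    (hA' : comp2Hom u u' v v' (contract A B u v) = C lam * A')
    (hB' : comp2Hom u u' v v' (contract A B u' v') = C lam * B') :
    C ((u * v' - u' * v) ^ 2) * comp2Hom u u' v v' (Dpoly A B) = C (lam ^ 2) * Dpoly A' B' := by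
  rw [sq lam, ← Dpoly_C_mul_C_mul, ← hA', ← hB', Dpoly_comp2Hom, Dpoly_contract,
    map_mul (comp2Hom u u' v v'), comp2Hom_C, sq, C_mul, mul_assoc]

lemma exists_Dpoly_eq_of_linConj (hν : ν < d) (h : LinConj A B (A3d d ν) (B3d d ν)) :
    ∃ u v u' v' c : ℂ, u * v' - u' * v ≠ 0 ∧ c ≠ 0 ∧
      Dpoly A B = C c * lineThrough u v ^ ν * lineThrough u' v' ^ (d - ν - 1) *
        lineThrough (u - u') (v - v') ^ (d - 1) := by
  obtain ⟨u, u', v, v', lam, hdet, hlam, hA, hB⟩ := linConj_iff.1 h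
  have hD := C_det_sq_mul_comp2Hom_Dpoly hA hB
  have hlines := comp2Hom_lineThrough_pow_mul u u' v v' ν (d - ν - 1) (d - 1)
  rw [Dpoly_A3d_B3d hν] at hD
  set δ := u * v' - u' * v
  set κ : ℂ := d ^ 2 * (d - 1).choose ν
  set ε := δ ^ ν * (-δ) ^ (d - ν - 1) * δ ^ (d - 1)
  set P := lineThrough u v ^ ν * lineThrough u' v' ^ (d - ν - 1) *
    lineThrough (u - u') (v - v') ^ (d - 1)
  have hκ : κ ≠ 0 := mul_ne_zero (pow_ne_zero 2 (Nat.cast_ne_zero.2 (by omega)))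
    (Nat.cast_ne_zero.2 (Nat.choose_pos (by omega)).ne')
  have hε : ε ≠ 0 := mul_ne_zero (mul_ne_zero (pow_ne_zero _ hdet)
    (pow_ne_zero _ (neg_ne_zero.2 hdet))) (pow_ne_zero _ hdet)
  have hDP : C (ε * δ ^ 2) * Dpoly A B = C (lam ^ 2 * κ) * P := by
    apply comp2Hom_injective hdet
    rw [map_mul (comp2Hom u u' v v') (C _), map_mul (comp2Hom u u' v v') (C _), comp2Hom_C,
      comp2Hom_C, hlines, C_mul (a := ε), C_mul (a := lam ^ 2)]
    linear_combination C ε * hD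
  have hden : ε * δ ^ 2 ≠ 0 := mul_ne_zero hε (pow_ne_zero 2 hdet)
  refine ⟨u, v, u', v', lam ^ 2 * κ / (ε * δ ^ 2), hdet,
    div_ne_zero (mul_ne_zero (pow_ne_zero 2 hlam) hκ) hden, ?_⟩
  apply mul_left_cancel₀ (C_ne_zero.2 hden)
  rw [hDP, mul_assoc (C _), mul_assoc (C _), ← mul_assoc (C _) (C _), ← C_mul,
    mul_div_cancel₀ _ hden]

end Classification

/-- A convex homogeneous foliation `ω = A dx + B dy` of degree `d ≥ 3` has type
`1·R_ν + 1·R_{d−ν−1} + 1·R_{d−1}` (with `1 ≤ ν ≤ d−2`) if and only if `ω` is linearly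
conjugate to `ω₃^{d,ν}`. -/
theorem type_R_nu_classification_iff_conj
    (d ν : ℕ) (hd : 3 ≤ d) (hν : 1 ≤ ν) (hν' : ν ≤ d - 2)
    (A B : P2) (hA : A.IsHomogeneous d) (hB : B.IsHomogeneous d)
    (hcop : NoCommonFactor A B) (hconv : IsConvexPair A B) :
    (∃ c : ℂ, c ≠ 0 ∧ ∃ l₁ l₂ l₃ : P2,
        l₁.IsHomogeneous 1 ∧ l₂.IsHomogeneous 1 ∧ l₃.IsHomogeneous 1 ∧
        l₁ ≠ 0 ∧ l₂ ≠ 0 ∧ l₃ ≠ 0 ∧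
        ¬ Proportional l₁ l₂ ∧ ¬ Proportional l₁ l₃ ∧ ¬ Proportional l₂ l₃ ∧
        Dpoly A B = C c * l₁ ^ ν * l₂ ^ (d - ν - 1) * l₃ ^ (d - 1)) ↔
      LinConj A B (A3d d ν) (B3d d ν) := by
  constructor
  · rintro ⟨c, -, l₁, l₂, l₃, hl₁, hl₂, hl₃, -, -, -, h₁₂, h₁₃, h₂₃, hD⟩
    obtain ⟨u, v, u', v', hdet, ha₁, ha₂, rfl⟩ :=
      exists_associated_lineThrough_sub hl₁ hl₂ hl₃ h₁₂ h₁₃ h₂₃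
    refine linConj_of_pow_dvd_Dpoly (by omega) (by omega) hA hB hcop hconv hdet
      (ha₁.pow_pow.symm.dvd.trans ?_) (ha₂.pow_pow.symm.dvd.trans ?_) ?_
    · exact hD ▸ ((dvd_mul_left _ _).mul_right _).mul_right _
    · exact hD ▸ (dvd_mul_left _ _).mul_right _
    · exact hD ▸ dvd_mul_left _ _
  · intro h
    obtain ⟨u, v, u', v', c, hdet, hc, hD⟩ := exists_Dpoly_eq_of_linConj (by omega) h
    obtain ⟨hl, hl', hlsub⟩ := lineThrough_triple_ne_zero hdet
    obtain ⟨hll', hlsub', hl'sub⟩ := lineThrough_triple_not_proportional hdet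
    exact ⟨c, hc, _, _, _, isHomogeneous_lineThrough _ _, isHomogeneous_lineThrough _ _,
      isHomogeneous_lineThrough _ _, hl, hl', hlsub, hll', hlsub', hl'sub, hD⟩
end
end

section
/- Let F be a reduced convex foliation of degree d ≥ 1 on ℙ²(ℂ) (so F admits 3d pairwise non-proportional invariant lines) and let {ℓ = 0} be one of its invariant lines. Then F has exactly d+1 singular points on the line {ℓ = 0}, and Σ_s (σ(F,s) − 1) = 3d − 1, where the sum ranges over the singular points s of F lying on {ℓ = 0} and σ(F,s) denotes the number of the 3d invariant lines of F passing through s. -/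
open MvPolynomial

noncomputable section

/-- Polynomials in three variables `x = X 0`, `y = X 1`, `z = X 2` over `ℂ`. -/
abbrev P3 : Type := MvPolynomial (Fin 3) ℂ

/-- The linear form `αx + βy + γz` with coefficient vector `l = (α, β, γ)`. -/
def lin (l : Fin 3 → ℂ) : P3 := C (l 0) * X 0 + C (l 1) * X 1 + C (l 2) * X 2

/-- The line `{αx + βy + γz = 0}` is invariant by the foliation defined by
`ω = a dx + b dy + c dz`: the linear form divides the coefficients of `ω ∧ dℓ`. -/
def InvLine (a b c : P3) (l : Fin 3 → ℂ) : Prop :=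
  l ≠ 0 ∧
  lin l ∣ (C (l 1) * a - C (l 0) * b) ∧
  lin l ∣ (C (l 2) * a - C (l 0) * c) ∧
  lin l ∣ (C (l 2) * b - C (l 1) * c)

/-- `(a, b, c)` defines a foliation of degree `d` on `ℙ²(ℂ)`: homogeneous of degree
`d+1`, without common factor, satisfying the Euler condition. -/
def IsFoliation (d : ℕ) (a b c : P3) : Prop :=
  a.IsHomogeneous (d + 1) ∧ b.IsHomogeneous (d + 1) ∧ c.IsHomogeneous (d + 1) ∧
  (∀ p : P3, p ∣ a → p ∣ b → p ∣ c → IsUnit p) ∧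
  X 0 * a + X 1 * b + X 2 * c = 0

/-- Points of the complex projective plane. -/
abbrev PP2 : Type := Projectivization ℂ (Fin 3 → ℂ)

/-- `p` is a singular point of the foliation defined by `ω = a dx + b dy + c dz`. -/
def IsSingOn (a b c : P3) (p : PP2) : Prop :=
  eval p.rep a = 0 ∧ eval p.rep b = 0 ∧ eval p.rep c = 0

/-- The point `p` lies on the line with coefficient vector `l`. -/
def OnLine (l : Fin 3 → ℂ) (p : PP2) : Prop := ∑ j, l j * p.rep j = 0

/-!
Let `Z` be the vector field generating the foliation for which the linear form `l` of the given
invariant line is a first integral. The product `Z ⨯₃ Z'` of `Z` with its acceleration is then `H`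
times `l`, where `H` is the equation of the inflection curve. It has degree `3d - 1` and vanishes on
the other `3d - 1` invariant lines, so it is their product, up to a constant which is not zero
because the integral curves of `Z` are not all straight lines.

Along a parametrization `p(t)` of the line, `H` restricts to `φ * (a * b' - a' * b)`, where
`φ = b + t * a` has degree `d + 1` and vanishes at the singular points. If exactly `N` of the other
invariant lines pass through `p(r)`, then `(t - r) ^ N` divides `b + r * a`, so at a double root `r`
of `φ` the restriction of `H` would vanish to order `N + 1`; but as a product of linear forms it
vanishes to order `N` only. Hence `φ` has `d + 1` distinct roots. The sum counts each of the other
invariant lines once, at its intersection with the given line, which is a singular point.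
-/

open scoped Matrix Polynomial

section DoubleCounting

lemma sum_ncard_sub_one_eq_card_sub_one {ι α : Type*} [Fintype ι] {r : ι → α → Prop}
    {S : Finset α} {k : ι} (hk : ∀ p ∈ S, r k p) (h : ∀ i ≠ k, ∃! p, p ∈ S ∧ r i p) :
    ∑ p ∈ S, (({i | r i p}.ncard : ℤ) - 1) = Fintype.card ι - 1 := by
  classical
  have hncard {p : α} (hp : p ∈ S) :
      ({i | r i p}.ncard : ℤ) - 1 = ((Finset.univ.erase k).bipartiteBelow r p).card := by
    rw [Finset.bipartiteBelow, Finset.filter_erase,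
      Finset.cast_card_erase_of_mem (by simp [hk p hp]), ← Set.ncard_coe_finset]
    simp
  have hone {i : ι} (hi : i ∈ Finset.univ.erase k) : (S.bipartiteAbove r i).card = 1 := by
    simpa [Finset.card_eq_one_iff_existsUnique, Finset.bipartiteAbove] using
      h i (Finset.ne_of_mem_erase hi)
  rw [Finset.sum_congr rfl fun p ↦ hncard, ← Nat.cast_sum,
    ← Finset.sum_card_bipartiteAbove_eq_sum_card_bipartiteBelow, Finset.sum_congr rfl fun i ↦ hone,
    Finset.sum_const, smul_eq_mul, mul_one, Finset.cast_card_erase_of_mem (Finset.mem_univ k),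
    Finset.card_univ]

end DoubleCounting

section CrossProduct

variable {R : Type*} [CommRing R]

lemma map_crossProduct {S : Type*} [CommRing S] (f : R →+* S) (v w : Fin 3 → R) :
    f ∘ (v ⨯₃ w) = (f ∘ v) ⨯₃ (f ∘ w) := by
  ext i
  fin_cases i <;> simp [cross_apply]

lemma cross_eq_zero_iff_forall_mul_eq {v w : Fin 3 → R} :
    v ⨯₃ w = 0 ↔ ∀ i j, v i * w j = v j * w i := by
  simp only [cross_apply, funext_iff, Fin.forall_fin_succ, Fin.isValue, Matrix.cons_val_zero,
    Matrix.cons_val_succ, Pi.zero_apply, sub_eq_zero, IsEmpty.forall_iff, and_true]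
  grind

lemma eq_smul_of_cross_eq_zero {e l v : Fin 3 → R} (hle : l ⬝ᵥ e = 1) (hv : l ⨯₃ v = 0) :
    v = (e ⬝ᵥ v) • l := by
  have h := cross_cross_eq_smul_sub_smul' e l v
  rw [hv, map_zero, hle, one_smul] at h
  exact (sub_eq_zero.1 h.symm).symm

lemma triple_product_smul_eq (l s u v : Fin 3 → R) :
    (l ⬝ᵥ s ⨯₃ u) • v = (v ⬝ᵥ s ⨯₃ u) • l + (v ⬝ᵥ u ⨯₃ l) • s + (v ⬝ᵥ l ⨯₃ s) • u := by
  simp only [cross_apply, dotProduct, Fin.sum_univ_three]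
  ext i
  fin_cases i <;> simp <;> ring

lemma triple_product_smul_eq' (l s u v : Fin 3 → R) :
    (l ⬝ᵥ s ⨯₃ u) • v = (l ⬝ᵥ v) • s ⨯₃ u + (s ⬝ᵥ v) • u ⨯₃ l + (u ⬝ᵥ v) • l ⨯₃ s := by
  simp only [cross_apply, dotProduct, Fin.sum_univ_three]
  ext i
  fin_cases i <;> simp <;> ring

lemma eq_smul_cross_of_dotProduct_eq_zero {l s u z : Fin 3 → R} {r : R}
    (hlsu : l ⬝ᵥ s ⨯₃ u = 1) (hl : l ⬝ᵥ z = 0) (hr : (u + r • s) ⬝ᵥ z = 0) :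
    z = -(s ⬝ᵥ z) • l ⨯₃ (u + r • s) := by
  have h := triple_product_smul_eq' l s u z
  rw [add_dotProduct, smul_dotProduct, smul_eq_mul] at hr
  rw [hlsu, one_smul, hl, zero_smul, zero_add, eq_neg_of_add_eq_zero_left hr, ← cross_anticomm] at h
  conv_lhs => rw [h]
  rw [map_add, map_smul]
  module

lemma cross_ne_zero_of_triple_product_eq_one [Nontrivial R] {l s u : Fin 3 → R}
    (h : l ⬝ᵥ s ⨯₃ u = 1) : l ⨯₃ s ≠ 0 := by
  intro h0
  rw [← triple_product_permutation, h0, dotProduct_zero] at h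
  exact zero_ne_one h

lemma cross_add_smul_ne_zero_of_triple_product_eq_one [Nontrivial R]
    {l s u : Fin 3 → R} (h : l ⬝ᵥ s ⨯₃ u = 1) (r : R) : l ⨯₃ (u + r • s) ≠ 0 := by
  refine cross_ne_zero_of_triple_product_eq_one (u := -s) ?_
  rw [map_neg, cross_anticomm, map_add, map_smul, cross_self, smul_zero, add_zero, h]

lemma exists_dotProduct_eq_one {K ι : Type*} [Field K] [Fintype ι] {v : ι → K} (hv : v ≠ 0) :
    ∃ e, v ⬝ᵥ e = 1 := by
  classical
  obtain ⟨i, hi⟩ := Function.ne_iff.1 hv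
  exact ⟨Pi.single i (v i)⁻¹, by rw [dotProduct_single, mul_inv_cancel₀ hi]⟩

lemma exists_cross_eq_of_dotProduct_eq_zero {K : Type*} [Field K] {l q : Fin 3 → K} (hl : l ≠ 0)
    (hq : q ≠ 0) (hlq : l ⬝ᵥ q = 0) : ∃ s u, l ⨯₃ s = q ∧ l ⬝ᵥ s ⨯₃ u = 1 := by
  obtain ⟨e, he⟩ := exists_dotProduct_eq_one hl
  obtain ⟨u, hu⟩ := exists_dotProduct_eq_one hq
  have hs : l ⨯₃ (q ⨯₃ e) = q := by
    rw [cross_cross_eq_smul_sub_smul', he, one_smul, dotProduct_comm, hlq, zero_smul, sub_zero]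
  refine ⟨q ⨯₃ e, u, hs, ?_⟩
  rw [← triple_product_permutation, hs, dotProduct_comm, hu]

lemma cross_ne_zero_of_forall_ne_smul {K : Type*} [Field K] {v w : Fin 3 → K}
    (hw : w ≠ 0) (h : ∀ t : K, v ≠ t • w) : v ⨯₃ w ≠ 0 := by
  rw [← cross_anticomm, neg_ne_zero, crossProduct_ne_zero_iff_linearIndependent,
    LinearIndependent.pair_iff' hw]
  exact fun t ht ↦ h t ht.symm

end CrossProduct

section Proportionality

lemma exists_forall_eq_mul_of_forall_mul_eq {R ι : Type*} [CommRing R] [IsDomain R]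
    [IsGCDMonoid R] [Finite ι] {v w : ι → R}
    (hv : ∀ p, (∀ i, p ∣ v i) → IsUnit p) (hvw : ∀ i j, v i * w j = v j * w i) :
    ∃ μ, ∀ i, w i = μ * v i := by
  have := Fintype.ofFinite ι
  have := Classical.choice (inferInstance : Nonempty (NormalizedGCDMonoid R))
  obtain ⟨i₀, hi₀⟩ : ∃ i, v i ≠ 0 := by
    by_contra! h
    exact not_isUnit_zero (hv 0 fun i ↦ by rw [h i])
  have hgcd : IsUnit (Finset.univ.gcd v) := hv _ fun i ↦ Finset.gcd_dvd (Finset.mem_univ i)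
  have hdvd : v i₀ ∣ Finset.univ.gcd v * w i₀ :=
    (Finset.dvd_gcd fun j _ ↦ ⟨w j, (hvw i₀ j).symm⟩).trans
      (Finset.gcd_mul_right' Finset.univ v (w i₀)).dvd
  obtain ⟨μ, hμ⟩ := (hgcd.dvd_mul_left).1 hdvd
  refine ⟨μ, fun j ↦ mul_left_cancel₀ hi₀ ?_⟩
  rw [hvw, hμ]
  ring

end Proportionality

section Derivation

variable {R σ A M : Type*} [CommRing R] [CommRing A] [Algebra R A] [AddCommGroup M]
  [Module A M] [Module R M] [Fintype σ]

lemma derivation_aeval (δ : Derivation R A M) (g : σ → A) (f : MvPolynomial σ R) :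
    δ (aeval g f) = ∑ i, aeval g (pderiv i f) • δ (g i) := by
  classical
  induction f using MvPolynomial.induction_on with
  | C r => simp
  | add f₁ f₂ h₁ h₂ => simp only [map_add, h₁, h₂, add_smul, Finset.sum_add_distrib]
  | mul_X f j h =>
    have hj (i : σ) : aeval g (pderiv i (f * X j)) • δ (g i) =
        g j • aeval g (pderiv i f) • δ (g i) + if i = j then aeval g f • δ (g j) else 0 := by
      split_ifs with hij
      · subst hij
        simp [add_smul, mul_smul, add_comm]
      · simp [pderiv_X_of_ne (Ne.symm hij), mul_smul]
    rw [Finset.sum_congr rfl fun i _ ↦ hj i, Finset.sum_add_distrib, Finset.sum_ite_eq',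
      if_pos (Finset.mem_univ j), ← Finset.smul_sum, ← h, map_mul, aeval_X, Derivation.leibniz,
      add_comm]

end Derivation

section AlongLine

lemma coeff_prod_sum_of_natDegree_le {R ι : Type*} [CommSemiring R] (s : Finset ι) (f : ι → R[X])
    (n : ι → ℕ) (h : ∀ i ∈ s, (f i).natDegree ≤ n i) :
    (∏ i ∈ s, f i).coeff (∑ i ∈ s, n i) = ∏ i ∈ s, (f i).coeff (n i) := by
  induction s using Finset.cons_induction with
  | empty => simp
  | cons i s hi ih =>
    rw [Finset.forall_mem_cons] at h
    rw [Finset.prod_cons, Finset.sum_cons, Finset.prod_cons, ← ih h.2]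
    exact Polynomial.coeff_mul_add_eq_of_natDegree_le h.1
      ((Polynomial.natDegree_prod_le _ _).trans (Finset.sum_le_sum h.2))

variable {R σ A : Type*} [CommRing R] [CommRing A] [Algebra R A]

/-- The restriction of polynomial functions to the parametrized line `t ↦ x + t v`, as a
homomorphism to polynomials in `t`. The base point and the direction may have coordinates in an
`R`-algebra `A`, such as `MvPolynomial σ R` itself. -/
def alongLine (x v : σ → A) : MvPolynomial σ R →ₐ[R] A[X] :=
  aeval fun i ↦ Polynomial.C (v i) * Polynomial.X + Polynomial.C (x i)

variable (x v : σ → A)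

@[simp]
lemma alongLine_X (i : σ) : alongLine x v (X i : MvPolynomial σ R) =
    Polynomial.C (v i) * Polynomial.X + Polynomial.C (x i) :=
  aeval_X _ _

@[simp]
lemma alongLine_C (r : R) : alongLine x v (C r) = Polynomial.C (algebraMap R A r) := by
  simp [alongLine]

lemma eval_alongLine (a : A) (f : MvPolynomial σ R) :
    (alongLine x v f).eval a = aeval (x + a • v) f := by
  have h : ((Polynomial.aeval a).restrictScalars R).comp (alongLine x v) = aeval (x + a • v) := by
    ext i
    simp only [AlgHom.comp_apply, alongLine_X, AlgHom.restrictScalars_apply, map_add, map_mul,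
      Polynomial.aeval_C, Polynomial.aeval_X, aeval_X, Pi.add_apply, Pi.smul_apply, smul_eq_mul,
      Algebra.algebraMap_self, RingHom.id_apply]
    ring
  exact DFunLike.congr_fun h f

lemma derivative_alongLine [Fintype σ] (f : MvPolynomial σ R) :
    Polynomial.derivative (alongLine x v f) =
      ∑ i, alongLine x v (pderiv i f) * Polynomial.C (v i) := by
  have h := derivation_aeval (Polynomial.derivative'.restrictScalars R)
    (fun i ↦ Polynomial.C (v i) * Polynomial.X + Polynomial.C (x i)) f
  simp_rw [Derivation.restrictScalars_apply, Polynomial.derivative'_apply] at h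
  simpa [alongLine] using h

lemma coeff_alongLine_of_isHomogeneous {f : MvPolynomial σ R} {n : ℕ} (hf : f.IsHomogeneous n) :
    (alongLine x v f).coeff n = aeval v f := by
  rw [f.as_sum]
  simp only [map_sum, Polynomial.finsetSum_coeff]
  refine Finset.sum_congr rfl fun m hm ↦ ?_
  rw [alongLine, aeval_monomial, aeval_monomial, Polynomial.algebraMap_apply,
    Polynomial.coeff_C_mul, Finsupp.prod, Finsupp.prod, hf.degree_eq_sum_deg_support hm,
    coeff_prod_sum_of_natDegree_le]
  · refine congrArg _ (Finset.prod_congr rfl fun i _ ↦ ?_)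
    have h₁ : (Polynomial.C (v i) * Polynomial.X + Polynomial.C (x i)).coeff 1 = v i := by
      simp [Polynomial.coeff_C]
    rw [← congrArg (· ^ m i) h₁, ← Polynomial.coeff_pow_of_natDegree_le (by compute_degree),
      mul_one]
  · intro i _
    compute_degree

lemma natDegree_alongLine_le (x v : σ → R) (f : MvPolynomial σ R) :
    (alongLine x v f).natDegree ≤ f.totalDegree :=
  (aeval_natDegree_le f le_rfl _ fun i ↦ by compute_degree).trans (mul_one _).le

end AlongLine

section Homogeneous

variable {σ R : Type*} [CommRing R]

lemma aeval_smul_of_isHomogeneous {A : Type*} [CommRing A] [Algebra R A] {f : MvPolynomial σ R}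
    {n : ℕ} (hf : f.IsHomogeneous n) (a : A) (x : σ → A) : aeval (a • x) f = a ^ n * aeval x f := by
  rw [f.as_sum, map_sum, map_sum, Finset.mul_sum]
  refine Finset.sum_congr rfl fun m hm ↦ ?_
  rw [aeval_monomial, aeval_monomial, hf.degree_eq_sum_deg_support hm]
  simp [Finsupp.prod, mul_pow, Finset.prod_mul_distrib, Finset.prod_pow_eq_pow_sum, mul_left_comm]

attribute [local instance] MvPolynomial.gradedAlgebra in
lemma isHomogeneous_of_mul_left [IsDomain R] {f g : MvPolynomial σ R} {m n : ℕ}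
    (hf : f.IsHomogeneous m) (hf0 : f ≠ 0) (hfg : (f * g).IsHomogeneous (m + n)) :
    g.IsHomogeneous n := by
  have h := DirectSum.coe_decompose_mul_add_of_left_mem (homogeneousSubmodule σ R) (j := n)
    (b := g) hf
  rw [DirectSum.decompose_of_mem_same (homogeneousSubmodule σ R) hfg] at h
  rw [mul_left_cancel₀ hf0 h]
  exact (DirectSum.decompose (homogeneousSubmodule σ R) g n).2

lemma exists_eq_C_mul_of_dvd [IsDomain R] {f g : MvPolynomial σ R} {n : ℕ}
    (hf : f.IsHomogeneous n) (hg : g.IsHomogeneous n) (hg0 : g ≠ 0) (h : f ∣ g) :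
    ∃ κ, κ ≠ 0 ∧ g = C κ * f := by
  obtain ⟨q, rfl⟩ := h
  obtain ⟨hf0, hq0⟩ := mul_ne_zero_iff.1 hg0
  have hq : q.totalDegree = 0 := by
    have := totalDegree_mul_of_isDomain hf0 hq0
    rw [hg.totalDegree hg0, hf.totalDegree hf0] at this
    omega
  rw [totalDegree_eq_zero_iff_eq_C] at hq
  refine ⟨coeff 0 q, fun h0 ↦ hq0 ?_, ?_⟩
  · rw [hq, h0, map_zero]
  · rw [← hq, mul_comm]

lemma isHomogeneous_dotProduct {V W : Fin 3 → MvPolynomial σ R} {m n : ℕ}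
    (hV : ∀ i, (V i).IsHomogeneous m) (hW : ∀ i, (W i).IsHomogeneous n) :
    (V ⬝ᵥ W).IsHomogeneous (m + n) :=
  IsHomogeneous.sum _ _ _ fun i _ ↦ (hV i).mul (hW i)

lemma isHomogeneous_cross {V W : Fin 3 → MvPolynomial σ R} {m n : ℕ}
    (hV : ∀ i, (V i).IsHomogeneous m) (hW : ∀ i, (W i).IsHomogeneous n) (i : Fin 3) :
    ((V ⨯₃ W) i).IsHomogeneous (m + n) := by
  have h (j k) := (hV j).mul (hW k)
  fin_cases i <;> simpa [cross_apply] using (h _ _).sub (h _ _)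

lemma isHomogeneous_C_dotProduct {V : Fin 3 → MvPolynomial σ R} {d : ℕ} (l : Fin 3 → R)
    (hV : ∀ i, (V i).IsHomogeneous d) : ((C ∘ l) ⬝ᵥ V).IsHomogeneous d := by
  have h := isHomogeneous_dotProduct (V := C ∘ l) (fun i ↦ isHomogeneous_C _ _) hV
  rwa [zero_add] at h

end Homogeneous

section UnivariatePolynomial

lemma le_card_filter_isRoot_of_pow_dvd_prod {K ι : Type*} [Field K] {t : Finset ι} {f : ι → K[X]}
    (hf : ∀ i ∈ t, f i ≠ 0) (hdeg : ∀ i ∈ t, (f i).natDegree ≤ 1) {r : K} {n : ℕ}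
    [DecidablePred fun i ↦ (f i).IsRoot r]
    (h : (Polynomial.X - Polynomial.C r) ^ n ∣ ∏ i ∈ t, f i) :
    n ≤ {i ∈ t | (f i).IsRoot r}.card := by
  classical
  have hprod : ∏ i ∈ t, f i ≠ 0 := Finset.prod_ne_zero_iff.2 hf
  rw [← Polynomial.le_rootMultiplicity_iff hprod, ← Polynomial.count_roots,
    Polynomial.roots_prod _ _ hprod, Multiset.count_bind] at h
  rw [Finset.card_filter]
  refine h.trans (Finset.sum_le_sum fun i hi ↦ ?_)
  split_ifs with hr
  · exact (Multiset.count_le_card _ _).trans ((Polynomial.card_roots' _).trans (hdeg i hi))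
  · rw [Multiset.count_eq_zero_of_notMem fun hr' ↦ hr (Polynomial.isRoot_of_mem_roots hr')]

lemma pow_succ_dvd_mul_wronskian {R : Type*} [CommRing R] {p a b f : R[X]} {n : ℕ}
    (hb : p ^ n ∣ b) (hf : p ^ 2 ∣ f) : p ^ (n + 1) ∣ f * Polynomial.wronskian a b := by
  have hw : p ^ (n - 1) ∣ Polynomial.wronskian a b :=
    ((Polynomial.pow_sub_one_dvd_derivative_of_pow_dvd hb).mul_left _).sub
      (((pow_dvd_pow p (n.sub_le 1)).trans hb).mul_left _)
  refine (pow_dvd_pow p ?_).trans (pow_add p 2 (n - 1) ▸ mul_dvd_mul hf hw)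
  omega

lemma wronskian_add_smul_self {R : Type*} [CommRing R] (a b : R[X]) (r : R) :
    Polynomial.wronskian a (b + r • a) = Polynomial.wronskian a b := by
  rw [Polynomial.wronskian_add_right, ← Polynomial.wronskianBilin_apply _ (r • _), map_smul,
    Polynomial.wronskianBilin_apply, Polynomial.wronskian_self_eq_zero, smul_zero, add_zero]

end UnivariatePolynomial

section LinearForm

lemma lin_eq_dotProduct (l : Fin 3 → ℂ) : lin l = (C ∘ l : Fin 3 → P3) ⬝ᵥ X := by
  simp [lin, dotProduct, Fin.sum_univ_three]

lemma eval_comp_C (x l : Fin 3 → ℂ) : eval x ∘ (C ∘ l : Fin 3 → P3) = l := by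
  ext; simp

lemma eval_comp_X (x : Fin 3 → ℂ) : eval x ∘ (X : Fin 3 → P3) = x := by
  ext; simp

lemma eval_lin (x l : Fin 3 → ℂ) : eval x (lin l) = l ⬝ᵥ x := by
  rw [lin_eq_dotProduct, RingHom.map_dotProduct, eval_comp_C, eval_comp_X]

lemma lin_ne_zero {l : Fin 3 → ℂ} (hl : l ≠ 0) : lin l ≠ 0 := fun h ↦
  hl <| dotProduct_eq_zero l fun x ↦ by rw [← eval_lin, h, map_zero]

lemma isHomogeneous_lin (l : Fin 3 → ℂ) : (lin l).IsHomogeneous 1 := by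
  rw [lin_eq_dotProduct]
  exact IsHomogeneous.sum _ _ _ fun i _ ↦ isHomogeneous_C_mul_X _ _

lemma cross_eq_zero_of_lin_dvd {l m : Fin 3 → ℂ} (h : lin l ∣ lin m) : l ⨯₃ m = 0 := by
  rcases eq_or_ne m 0 with rfl | hm
  · exact map_zero _
  obtain ⟨κ, -, hκ⟩ :=
    exists_eq_C_mul_of_dvd (isHomogeneous_lin l) (isHomogeneous_lin m) (lin_ne_zero hm) h
  have hml : m = κ • l := by
    refine dotProduct_eq _ _ fun x ↦ ?_
    rw [smul_dotProduct, ← eval_lin, ← eval_lin, hκ, map_mul, eval_C, smul_eq_mul]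
  rw [hml, map_smul, cross_self, smul_zero]

lemma prime_lin {l : Fin 3 → ℂ} (hl : l ≠ 0) : Prime (lin l) := by
  refine (irreducible_of_totalDegree_eq_one
    ((isHomogeneous_lin l).totalDegree (lin_ne_zero hl)) fun x hx ↦ ?_).prime
  rw [isUnit_iff_ne_zero]
  rintro rfl
  exact lin_ne_zero hl (MvPolynomial.ext _ _ fun m ↦ by simpa using hx m)

lemma isRelPrime_lin {l m : Fin 3 → ℂ} (hlm : l ⨯₃ m ≠ 0) : IsRelPrime (lin l) (lin m) := by
  have hl : l ≠ 0 := by rintro rfl; simp at hlm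
  exact (prime_lin hl).irreducible.isRelPrime_iff_not_dvd.2 (mt cross_eq_zero_of_lin_dvd hlm)

lemma lin_dvd_of_eval_eq_zero {l : Fin 3 → ℂ} (hl : l ≠ 0) {f : P3}
    (hf : ∀ x, l ⬝ᵥ x = 0 → eval x f = 0) : lin l ∣ f := by
  have := (Ideal.span_singleton_prime (lin_ne_zero hl)).2 (prime_lin hl)
  rw [← Ideal.mem_span_singleton, ← IsPrime.vanishingIdeal_zeroLocus (K := ℂ) (Ideal.span {lin l})]
  intro x hx
  rw [aeval_eq_eval]
  refine hf x ?_
  rw [← eval_lin, ← aeval_eq_eval]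
  exact hx _ (Ideal.mem_span_singleton_self _)

end LinearForm

section TangentField

/-- A vector field generating the foliation `X ⨯₃ Z` of degree `d`, normalized along the invariant
line `l`: the linear form `lin l` is a first integral of `Z`. -/
structure IsTangentField (d : ℕ) (l : Fin 3 → ℂ) (Z : Fin 3 → P3) : Prop where
  isHomogeneous : ∀ i, (Z i).IsHomogeneous d
  dot_eq_zero : (C ∘ l : Fin 3 → P3) ⬝ᵥ Z = 0
  isUnit_of_dvd_cross : ∀ p, (∀ i, p ∣ (X ⨯₃ Z) i) → IsUnit p

lemma lin_dvd_cross_of_invLine {a b c : P3} {l : Fin 3 → ℂ} (h : InvLine a b c l) (i : Fin 3) :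
    lin l ∣ (![a, b, c] ⨯₃ (C ∘ l)) i := by
  obtain ⟨-, h₀₁, h₀₂, h₁₂⟩ := h
  fin_cases i
  · simpa [cross_apply, mul_comm] using h₁₂
  · simpa [cross_apply, mul_comm] using (dvd_neg.2 h₀₂)
  · simpa [cross_apply, mul_comm] using h₀₁

lemma exists_isTangentField {d : ℕ} {a b c : P3} (hfol : IsFoliation d a b c) {l : Fin 3 → ℂ}
    (hl : InvLine a b c l) : ∃ Z, IsTangentField d l Z ∧ X ⨯₃ Z = ![a, b, c] := by
  obtain ⟨ha, hb, hc, hcop, heuler⟩ := hfol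
  set w : Fin 3 → P3 := ![a, b, c] with hw
  have hl₀ := lin_ne_zero hl.1
  choose Z hZ using lin_dvd_cross_of_invLine hl
  have hZ : w ⨯₃ (C ∘ l) = lin l • Z := funext hZ
  have hX : X ⬝ᵥ w = 0 := by simpa [hw, dotProduct, Fin.sum_univ_three] using heuler
  have hcross : X ⨯₃ Z = w := by
    refine smul_right_injective _ hl₀ ?_
    dsimp only
    rw [← map_smul, ← hZ, cross_cross_eq_smul_sub_smul', dotProduct_comm w, hX, zero_smul, sub_zero,
      lin_eq_dotProduct, dotProduct_comm]
  have hw_hom : ∀ i, (w i).IsHomogeneous (d + 1) := Fin.forall_fin_succ.2 (by simp [*])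
  refine ⟨Z, ⟨fun i ↦ ?_, ?_, fun p hp ↦ ?_⟩, hcross⟩
  · refine isHomogeneous_of_mul_left (isHomogeneous_lin l) hl₀ ?_
    rw [add_comm, ← smul_eq_mul, ← Pi.smul_apply, ← hZ]
    exact isHomogeneous_cross hw_hom (fun j ↦ isHomogeneous_C _ _) i
  · refine (mul_eq_zero.1 ?_).resolve_left hl₀
    rw [← smul_eq_mul, ← dotProduct_smul, ← hZ, dot_cross_self]
  · rw [hcross] at hp
    exact hcop p (hp 0) (hp 1) (hp 2)

lemma lin_dvd_dotProduct_of_invLine {l m : Fin 3 → ℂ} (hml : m ⨯₃ l ≠ 0) {a b c : P3}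
    {Z : Fin 3 → P3} (hw : X ⨯₃ Z = ![a, b, c]) (hm : InvLine a b c m) :
    lin m ∣ (C ∘ m : Fin 3 → P3) ⬝ᵥ Z := by
  have hi (i : Fin 3) : lin m ∣ ((C ∘ m : Fin 3 → P3) ⬝ᵥ Z) * X i := by
    have h := lin_dvd_cross_of_invLine hm i
    rw [← hw, cross_cross_eq_smul_sub_smul, dotProduct_comm, ← lin_eq_dotProduct] at h
    rw [dotProduct_comm]
    exact (dvd_sub_right (dvd_mul_right _ _)).1 h
  refine (isRelPrime_lin hml).dvd_of_dvd_mul_right ?_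
  rw [lin_eq_dotProduct l, ← smul_eq_mul, ← dotProduct_smul]
  exact Finset.dvd_sum fun i _ ↦ (hi i).mul_left _

variable {d : ℕ} {l : Fin 3 → ℂ} {Z : Fin 3 → P3}

namespace IsTangentField

lemma isUnit_of_dvd (hZ : IsTangentField d l Z) (p : P3) (hp : ∀ i, p ∣ Z i) : IsUnit p := by
  choose V hV using hp
  refine hZ.isUnit_of_dvd_cross p fun i ↦ ⟨(X ⨯₃ V) i, ?_⟩
  rw [funext hV, show (fun i ↦ p * V i) = p • V from rfl, map_smul, Pi.smul_apply, smul_eq_mul]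

lemma exists_eq_smul_of_cross_eq_zero (hZ : IsTangentField d l Z) {V : Fin 3 → P3}
    (hV : Z ⨯₃ V = 0) : ∃ μ : P3, V = μ • Z :=
  (exists_forall_eq_mul_of_forall_mul_eq hZ.isUnit_of_dvd
    (cross_eq_zero_iff_forall_mul_eq.1 hV)).imp fun _ h ↦ funext h

lemma dotProduct_ne_zero (hZ : IsTangentField d l Z) (hd : 1 ≤ d) {n : Fin 3 → ℂ}
    (hln : l ⨯₃ n ≠ 0) : (C ∘ n : Fin 3 → P3) ⬝ᵥ Z ≠ 0 := by
  intro hn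
  have hcross : Z ⨯₃ (C ∘ (l ⨯₃ n)) = 0 := by
    rw [map_crossProduct, cross_cross_eq_smul_sub_smul', dotProduct_comm Z, hn, hZ.dot_eq_zero]
    simp
  obtain ⟨μ, hμ⟩ := hZ.exists_eq_smul_of_cross_eq_zero hcross
  refine hln (funext fun i ↦ ?_)
  have hi := congrArg (eval 0) (congrFun hμ i)
  have h0 : eval 0 (Z i) = 0 := by
    have := aeval_smul_of_isHomogeneous (hZ.isHomogeneous i) (0 : ℂ) 0
    rwa [zero_smul, zero_pow (by omega), zero_mul, aeval_eq_eval] at this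
  rw [Pi.smul_apply, smul_eq_mul, map_mul, h0, mul_zero] at hi
  simpa using hi

end IsTangentField

end TangentField

section Acceleration

variable {R σ : Type*} [CommRing R]

/-- The derivative of a polynomial vector field along itself, i.e. the acceleration of its integral
curves. -/
def acceleration (V : σ → MvPolynomial σ R) : σ → MvPolynomial σ R :=
  fun i ↦ mkDerivation R V (V i)

lemma mkDerivation_eq_sum [Fintype σ] (V : σ → MvPolynomial σ R) (f : MvPolynomial σ R) :
    mkDerivation R V f = ∑ i, pderiv i f * V i := by
  simpa using derivation_aeval (mkDerivation R V) X f

lemma isHomogeneous_acceleration [Finite σ] {V : σ → MvPolynomial σ R} {d : ℕ}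
    (hV : ∀ i, (V i).IsHomogeneous d) (i : σ) : (acceleration V i).IsHomogeneous (d - 1 + d) := by
  have := Fintype.ofFinite σ
  rw [acceleration, mkDerivation_eq_sum]
  exact IsHomogeneous.sum _ _ _ fun j _ ↦ (hV i).pderiv.mul (hV j)

lemma derivation_C_dotProduct {τ : Type*} [Fintype τ]
    (δ : Derivation R (MvPolynomial σ R) (MvPolynomial σ R)) (l : τ → R)
    (V : τ → MvPolynomial σ R) : δ ((C ∘ l) ⬝ᵥ V) = (C ∘ l) ⬝ᵥ fun i ↦ δ (V i) := by
  simp [dotProduct]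

lemma C_dotProduct_acceleration [Fintype σ] (l : σ → R) (V : σ → MvPolynomial σ R) :
    (C ∘ l) ⬝ᵥ acceleration V = mkDerivation R V ((C ∘ l) ⬝ᵥ V) :=
  (derivation_C_dotProduct _ l V).symm

-- Differentiate `f (X + t V)` along `V`: the derivative of `X + t V` is `(1 + t μ) V`.
lemma derivation_coeff_alongLine [Finite σ] {V : σ → MvPolynomial σ R} {μ : MvPolynomial σ R}
    (hV : acceleration V = μ • V) (f : MvPolynomial σ R) (k : ℕ) :
    mkDerivation R V ((alongLine X V f).coeff k) =
      (k + 1) * (alongLine X V f).coeff (k + 1) + k * μ * (alongLine X V f).coeff k := by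
  have := Fintype.ofFinite σ
  set δ := mkDerivation R V
  set Δ : Derivation R (MvPolynomial σ R)[X] (MvPolynomial σ R)[X] :=
    PolynomialModule.equivPolynomialSelf.toLinearMap.compDer δ.mapCoeffs
  have hΔ_coeff (p : (MvPolynomial σ R)[X]) (n : ℕ) : (Δ p).coeff n = δ (p.coeff n) := rfl
  have hΔ_C (a : MvPolynomial σ R) : Δ (Polynomial.C a) = Polynomial.C (δ a) := by
    ext n : 1
    simp [hΔ_coeff, Polynomial.coeff_C, apply_ite δ]
  have hΔ_X : Δ Polynomial.X = 0 := by
    ext n : 1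
    simp [hΔ_coeff, Polynomial.coeff_X, apply_ite δ]
  have hδV (i : σ) : δ (V i) = μ * V i := congrFun hV i
  have hΔ_alongLine : Δ (alongLine X V f) =
      (1 + Polynomial.X * Polynomial.C μ) * Polynomial.derivative (alongLine X V f) := by
    rw [derivative_alongLine, alongLine, derivation_aeval, Finset.mul_sum]
    refine Finset.sum_congr rfl fun i _ ↦ ?_
    have hδX : δ (X i) = V i := mkDerivation_X _ _ _
    simp only [map_add, Derivation.leibniz, hΔ_C, hΔ_X, hδV, hδX, map_mul, smul_eq_mul]
    ring
  rw [← hΔ_coeff, hΔ_alongLine, add_mul, one_mul, mul_assoc, Polynomial.coeff_add,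
    Polynomial.coeff_derivative]
  cases k with
  | zero => simp
  | succ k =>
    rw [Polynomial.coeff_X_mul, Polynomial.coeff_C_mul, Polynomial.coeff_derivative]
    push_cast
    ring

lemma exists_coeff_alongLine_eq_mul {K : Type*} [Field K] [CharZero K] [Finite σ]
    {V : σ → MvPolynomial σ K} {μ : MvPolynomial σ K} (hV : acceleration V = μ • V) (k : ℕ) :
    ∃ c, ∀ i, (alongLine X V (V i)).coeff k = c * V i := by
  induction k with
  | zero =>
    refine ⟨1, fun i ↦ ?_⟩
    rw [Polynomial.coeff_zero_eq_eval_zero, eval_alongLine]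
    simp
  | succ k ih =>
    obtain ⟨c, hc⟩ := ih
    have hk : C ((k + 1 : K)⁻¹) * (k + 1 : MvPolynomial σ K) = 1 := by
      rw [← map_natCast C, ← C_1, ← C_add, ← C_mul, C_1,
        inv_mul_cancel₀ k.cast_add_one_ne_zero, C_1]
    refine ⟨C ((k + 1 : K)⁻¹) * (mkDerivation K V c + c * μ - (k : MvPolynomial σ K) * μ * c),
      fun i ↦ ?_⟩
    have h := derivation_coeff_alongLine hV (V i) k
    have hVi : mkDerivation K V (V i) = μ * V i := congrFun hV i
    rw [hc, Derivation.leibniz, hVi, smul_eq_mul, smul_eq_mul] at h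
    linear_combination (-(alongLine X V (V i)).coeff (k + 1)) * hk - C ((k + 1 : K)⁻¹) * h

lemma exists_aeval_self_eq_mul {K : Type*} [Field K] [CharZero K] [Finite σ] {d : ℕ}
    {V : σ → MvPolynomial σ K} {μ : MvPolynomial σ K} (hV : ∀ i, (V i).IsHomogeneous d)
    (hμ : acceleration V = μ • V) : ∃ c, ∀ i, aeval V (V i) = c * V i := by
  obtain ⟨c, hc⟩ := exists_coeff_alongLine_eq_mul hμ d
  exact ⟨c, fun i ↦ by rw [← coeff_alongLine_of_isHomogeneous X V (hV i), hc]⟩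

end Acceleration

section Pencil

variable {d : ℕ} {l s u : Fin 3 → ℂ} {Z : Fin 3 → P3}

/-- The polynomial whose roots `t` are the singular points `l ⨯₃ (u + t • s)` of the foliation on
the line `l`, when `l`, `s`, `u` is a basis and `l ⨯₃ s` is not singular. -/
def singularityPoly (l s u : Fin 3 → ℂ) (Z : Fin 3 → P3) : ℂ[X] :=
  alongLine (l ⨯₃ u) (l ⨯₃ s) ((C ∘ u) ⬝ᵥ Z) +
    Polynomial.X * alongLine (l ⨯₃ u) (l ⨯₃ s) ((C ∘ s) ⬝ᵥ Z)

lemma eval_singularityPoly (t : ℂ) : (singularityPoly l s u Z).eval t =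
    (u + t • s) ⬝ᵥ (eval (l ⨯₃ (u + t • s)) ∘ Z) := by
  simp only [singularityPoly, Polynomial.eval_add, Polynomial.eval_mul, Polynomial.eval_X,
    eval_alongLine, aeval_eq_eval, RingHom.map_dotProduct, eval_comp_C, map_add, map_smul,
    add_dotProduct, smul_dotProduct, smul_eq_mul]

lemma eval_cross_of_dotProduct_eq_zero (hZ : (C ∘ l : Fin 3 → P3) ⬝ᵥ Z = 0) (n : Fin 3 → ℂ) :
    eval (l ⨯₃ n) ∘ (X ⨯₃ Z) = -(n ⬝ᵥ (eval (l ⨯₃ n) ∘ Z)) • l := by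
  have h := congrArg (eval (l ⨯₃ n)) hZ
  rw [RingHom.map_dotProduct, eval_comp_C, map_zero] at h
  rw [map_crossProduct, eval_comp_X, cross_cross_eq_smul_sub_smul, h, zero_smul, zero_sub, neg_smul]

lemma natDegree_singularityPoly (hZ : ∀ i, (Z i).IsHomogeneous d)
    (hs : s ⬝ᵥ (eval (l ⨯₃ s) ∘ Z) ≠ 0) :
    (singularityPoly l s u Z).natDegree = d + 1 := by
  have hdot (n : Fin 3 → ℂ) := isHomogeneous_C_dotProduct n hZ
  have hdeg (n : Fin 3 → ℂ) : (alongLine (l ⨯₃ u) (l ⨯₃ s) ((C ∘ n) ⬝ᵥ Z)).natDegree ≤ d :=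
    (natDegree_alongLine_le _ _ _).trans (hdot n).totalDegree_le
  have hcoeff : (singularityPoly l s u Z).coeff (d + 1) = s ⬝ᵥ (eval (l ⨯₃ s) ∘ Z) := by
    rw [singularityPoly, Polynomial.coeff_add,
      Polynomial.coeff_eq_zero_of_natDegree_lt (Nat.lt_succ_of_le (hdeg u)), zero_add,
      Polynomial.coeff_X_mul, coeff_alongLine_of_isHomogeneous _ _ (hdot s), aeval_eq_eval,
      RingHom.map_dotProduct, eval_comp_C]
  refine Polynomial.natDegree_eq_of_le_of_coeff_ne_zero ?_ (hcoeff.trans_ne hs)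
  refine Polynomial.natDegree_add_le_of_degree_le ((hdeg u).trans d.le_succ) ?_
  rw [add_comm]
  exact Polynomial.natDegree_mul_le_of_le Polynomial.natDegree_X_le (hdeg s)

lemma eval_singularityPoly_eq_zero (hZ : IsTangentField d l Z) {c : P3}
    (hc : ∀ i, aeval Z (Z i) = c * Z i) (hlsu : l ⬝ᵥ s ⨯₃ u = 1) {x : Fin 3 → ℂ} {r : ℂ}
    (hx : s ⬝ᵥ (eval x ∘ Z) ≠ 0) (hr : (u + r • s) ⬝ᵥ (eval x ∘ Z) = 0) :
    (singularityPoly l s u Z).eval r = 0 := by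
  set z := eval x ∘ Z
  have hl : l ⬝ᵥ z = 0 := by
    rw [← eval_comp_C x l, ← RingHom.map_dotProduct, hZ.dot_eq_zero, map_zero]
  have hz : z = -(s ⬝ᵥ z) • l ⨯₃ (u + r • s) := eq_smul_cross_of_dotProduct_eq_zero hlsu hl hr
  have hZz : eval z ∘ Z = eval x c • z := by
    ext i
    have h := congrArg (aeval x) (hc i)
    rw [comp_aeval_apply, map_mul, aeval_eq_eval, aeval_eq_eval] at h
    exact h
  have hZz' : eval z ∘ Z = (-(s ⬝ᵥ z)) ^ d • (eval (l ⨯₃ (u + r • s)) ∘ Z) := by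
    ext i
    have h := aeval_smul_of_isHomogeneous (hZ.isHomogeneous i) (-(s ⬝ᵥ z)) (l ⨯₃ (u + r • s))
    rwa [← hz] at h
  rw [eval_singularityPoly]
  refine (mul_eq_zero.1 ?_).resolve_left (pow_ne_zero d (neg_ne_zero.2 hx))
  rw [← smul_eq_mul, ← dotProduct_smul, ← hZz', hZz, dotProduct_smul, hr, smul_zero]

-- If `Z ⨯₃ acceleration Z = 0`, the integral curves of `Z` are straight lines along which the
-- direction of `Z` is constant. The direction of `Z` at any point is then a singular point of the
-- line `l`. Since there are finitely many of these, one of them would be the direction everywhere.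
lemma IsTangentField.cross_acceleration_ne_zero (hZ : IsTangentField d l Z) (hd : 1 ≤ d)
    (hlsu : l ⬝ᵥ s ⨯₃ u = 1) (hs : s ⬝ᵥ (eval (l ⨯₃ s) ∘ Z) ≠ 0) : Z ⨯₃ acceleration Z ≠ 0 := by
  intro h
  obtain ⟨μ, hμ⟩ := hZ.exists_eq_smul_of_cross_eq_zero h
  obtain ⟨c, hc⟩ := exists_aeval_self_eq_mul hZ.isHomogeneous hμ
  set φ := singularityPoly l s u Z with hφ_def
  have hφ : φ ≠ 0 := by
    intro h0
    have := natDegree_singularityPoly (u := u) hZ.isHomogeneous hs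
    simp [← hφ_def, h0] at this
  have hprod : (C ∘ s ⬝ᵥ Z) * ∏ r ∈ φ.roots.toFinset, (C ∘ (u + r • s) ⬝ᵥ Z) = 0 := by
    refine MvPolynomial.funext fun x ↦ ?_
    rw [map_mul, map_prod, map_zero, mul_eq_zero, RingHom.map_dotProduct, eval_comp_C,
      or_iff_not_imp_left]
    intro hx
    set z := eval x ∘ Z
    have hr : (u + (-(u ⬝ᵥ z) / (s ⬝ᵥ z)) • s) ⬝ᵥ z = 0 := by
      rw [add_dotProduct, smul_dotProduct, smul_eq_mul, div_mul_cancel₀ _ hx, add_neg_cancel]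
    refine Finset.prod_eq_zero (Multiset.mem_toFinset.2 ((Polynomial.mem_roots hφ).2
      (eval_singularityPoly_eq_zero hZ hc hlsu hx hr))) ?_
    rw [RingHom.map_dotProduct, eval_comp_C, hr]
  rw [mul_eq_zero, Finset.prod_eq_zero_iff] at hprod
  obtain h | ⟨r, -, h⟩ := hprod
  · exact hZ.dotProduct_ne_zero hd (cross_ne_zero_of_triple_product_eq_one hlsu) h
  · exact hZ.dotProduct_ne_zero hd (cross_add_smul_ne_zero_of_triple_product_eq_one hlsu r) h

end Pencil

section Inflection

variable {d : ℕ} {l s u : Fin 3 → ℂ} {Z : Fin 3 → P3}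

lemma IsTangentField.exists_frame (hZ : IsTangentField d l Z) (hl : l ≠ 0) :
    ∃ s u, l ⬝ᵥ s ⨯₃ u = 1 ∧ s ⬝ᵥ (eval (l ⨯₃ s) ∘ Z) ≠ 0 := by
  obtain ⟨q, hlq, hwq⟩ : ∃ q, l ⬝ᵥ q = 0 ∧ eval q ∘ (X ⨯₃ Z) ≠ 0 := by
    by_contra! h
    exact (prime_lin hl).not_isUnit (hZ.isUnit_of_dvd_cross _ fun i ↦
      lin_dvd_of_eval_eq_zero hl fun q hq ↦ congrFun (h q hq) i)
  have hq : q ≠ 0 := by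
    rintro rfl
    rw [map_crossProduct, eval_comp_X] at hwq
    simp at hwq
  obtain ⟨s, u, rfl, hlsu⟩ := exists_cross_eq_of_dotProduct_eq_zero hl hq hlq
  refine ⟨s, u, hlsu, fun h ↦ hwq ?_⟩
  rw [eval_cross_of_dotProduct_eq_zero hZ.dot_eq_zero, h, neg_zero, zero_smul]

lemma IsTangentField.exists_cross_acceleration_eq_smul (hZ : IsTangentField d l Z) (hl : l ≠ 0) :
    ∃ H : P3, H.IsHomogeneous (d + (d - 1 + d)) ∧ Z ⨯₃ acceleration Z = H • (C ∘ l) := by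
  obtain ⟨e, he⟩ := exists_dotProduct_eq_one hl
  have hle : (C ∘ l : Fin 3 → P3) ⬝ᵥ (C ∘ e) = 1 := by
    rw [← RingHom.map_dotProduct, he, map_one]
  have hlA : (C ∘ l : Fin 3 → P3) ⬝ᵥ acceleration Z = 0 := by
    rw [C_dotProduct_acceleration, hZ.dot_eq_zero, map_zero]
  refine ⟨(C ∘ e) ⬝ᵥ Z ⨯₃ acceleration Z, isHomogeneous_C_dotProduct e
    (isHomogeneous_cross hZ.isHomogeneous (isHomogeneous_acceleration hZ.isHomogeneous)),
    eq_smul_of_cross_eq_zero hle ?_⟩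
  rw [cross_cross_eq_smul_sub_smul', hlA, dotProduct_comm, hZ.dot_eq_zero, zero_smul, zero_smul,
    sub_zero]

lemma lin_dvd_of_cross_acceleration_eq_smul {H : P3} (hH : Z ⨯₃ acceleration Z = H • (C ∘ l))
    {m : Fin 3 → ℂ} (hml : m ⨯₃ l ≠ 0) (hm : lin m ∣ (C ∘ m : Fin 3 → P3) ⬝ᵥ Z) : lin m ∣ H := by
  have hmA : lin m ∣ (C ∘ m : Fin 3 → P3) ⬝ᵥ acceleration Z := by
    rw [C_dotProduct_acceleration]
    have hlin : mkDerivation ℂ Z (lin m) = (C ∘ m : Fin 3 → P3) ⬝ᵥ Z := by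
      rw [lin_eq_dotProduct, derivation_C_dotProduct]
      simp only [mkDerivation_X]
    obtain ⟨k, hk⟩ := id hm
    rw [hk, Derivation.leibniz, hlin, hk, smul_eq_mul, smul_eq_mul]
    exact (dvd_mul_right _ _).add ((dvd_mul_right _ _).mul_left _)
  obtain ⟨i, hi⟩ := Function.ne_iff.1 hml
  have hcross : H * C ((m ⨯₃ l) i) = ((C ∘ m : Fin 3 → P3) ⨯₃ (Z ⨯₃ acceleration Z)) i := by
    rw [hH, map_smul, ← map_crossProduct]
    rfl
  have hunit : IsUnit (C ((m ⨯₃ l) i) : P3) := (isUnit_iff_ne_zero.2 hi).map C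
  rw [← hunit.dvd_mul_right, hcross, cross_cross_eq_smul_sub_smul', dotProduct_comm Z]
  exact (hmA.mul_right _).sub (hm.mul_right _)

lemma dvd_prod_lin {ι : Type*} {t : Finset ι} {L : ι → Fin 3 → ℂ}
    (hL : (t : Set ι).Pairwise fun i j ↦ L i ⨯₃ L j ≠ 0) {H : P3} (hH : H.IsHomogeneous t.card)
    (hH₀ : H ≠ 0) (hdvd : ∀ i ∈ t, lin (L i) ∣ H) : H ∣ ∏ i ∈ t, lin (L i) := by
  have hprod : (∏ i ∈ t, lin (L i)).IsHomogeneous t.card := by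
    simpa using IsHomogeneous.prod t _ (fun _ ↦ 1) fun i _ ↦ isHomogeneous_lin (L i)
  obtain ⟨κ, hκ, rfl⟩ := exists_eq_C_mul_of_dvd hprod hH hH₀
    (Finset.prod_dvd_of_isRelPrime (fun i hi j hj hij ↦ isRelPrime_lin (hL hi hj hij)) hdvd)
  exact ((isUnit_iff_ne_zero.2 hκ).map C).mul_left_dvd.2 dvd_rfl

end Inflection

section SimpleZeros

variable {d : ℕ} {l s u : Fin 3 → ℂ} {Z : Fin 3 → P3}

lemma alongLine_mkDerivation {n : ℕ} {f : P3} (hZ : (C ∘ l : Fin 3 → P3) ⬝ᵥ Z = 0)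
    (hlsu : l ⬝ᵥ s ⨯₃ u = 1) (hf : f.IsHomogeneous n) :
    alongLine (l ⨯₃ u) (l ⨯₃ s) (mkDerivation ℂ Z f) =
      singularityPoly l s u Z * Polynomial.derivative (alongLine (l ⨯₃ u) (l ⨯₃ s) f) -
        n * alongLine (l ⨯₃ u) (l ⨯₃ s) ((C ∘ s) ⬝ᵥ Z) * alongLine (l ⨯₃ u) (l ⨯₃ s) f := by
  have hZi (i : Fin 3) : Z i =
      ((C ∘ u) ⬝ᵥ Z) * C ((l ⨯₃ s) i) - ((C ∘ s) ⬝ᵥ Z) * C ((l ⨯₃ u) i) := by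
    have h := congrFun (triple_product_smul_eq' (C ∘ l) (C ∘ s) (C ∘ u) Z) i
    rw [← map_crossProduct C, ← RingHom.map_dotProduct, hlsu, map_one, one_smul, hZ,
      ← map_crossProduct, ← map_crossProduct, zero_smul, zero_add, ← cross_anticomm l u] at h
    rw [h]
    simp only [Pi.add_apply, Pi.smul_apply, Function.comp_apply, Pi.neg_apply, map_neg, smul_eq_mul]
    ring
  have heuler := congrArg (alongLine (l ⨯₃ u) (l ⨯₃ s)) hf.sum_X_mul_pderiv
  rw [map_nsmul, nsmul_eq_mul, map_sum] at heuler
  rw [mkDerivation_eq_sum, derivative_alongLine, mul_right_comm, ← heuler, map_sum,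
    Finset.mul_sum, Finset.sum_mul, ← Finset.sum_sub_distrib]
  refine Finset.sum_congr rfl fun i _ ↦ ?_
  rw [map_mul, hZi, map_sub, map_mul, map_mul, map_mul, alongLine_C, alongLine_C, alongLine_X,
    singularityPoly]
  simp only [Algebra.algebraMap_self, RingHom.id_apply]
  ring

lemma IsTangentField.alongLine_eq_mul_wronskian (hZ : IsTangentField d l Z)
    (hlsu : l ⬝ᵥ s ⨯₃ u = 1) {H : P3} (hH : Z ⨯₃ acceleration Z = H • (C ∘ l)) :
    alongLine (l ⨯₃ u) (l ⨯₃ s) H = singularityPoly l s u Z *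
      Polynomial.wronskian (alongLine (l ⨯₃ u) (l ⨯₃ s) ((C ∘ s) ⬝ᵥ Z))
        (alongLine (l ⨯₃ u) (l ⨯₃ s) ((C ∘ u) ⬝ᵥ Z)) := by
  have hHsu : H = ((C ∘ s) ⬝ᵥ Z) * mkDerivation ℂ Z ((C ∘ u) ⬝ᵥ Z) -
      mkDerivation ℂ Z ((C ∘ s) ⬝ᵥ Z) * ((C ∘ u) ⬝ᵥ Z) := by
    have h := congrArg ((C ∘ (s ⨯₃ u)) ⬝ᵥ ·) hH
    simp only [map_crossProduct, cross_dot_cross, C_dotProduct_acceleration, dotProduct_smul] at h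
    rw [← map_crossProduct, ← RingHom.map_dotProduct, dotProduct_comm _ l, hlsu, map_one,
      smul_eq_mul, mul_one] at h
    exact h.symm
  rw [hHsu, map_sub, map_mul, map_mul,
    alongLine_mkDerivation hZ.dot_eq_zero hlsu (isHomogeneous_C_dotProduct u hZ.isHomogeneous),
    alongLine_mkDerivation hZ.dot_eq_zero hlsu (isHomogeneous_C_dotProduct s hZ.isHomogeneous),
    Polynomial.wronskian]
  ring

lemma lin_dvd_dotProduct_of_dotProduct_cross_eq_zero {m n : Fin 3 → ℂ}
    (hZ : (C ∘ l : Fin 3 → P3) ⬝ᵥ Z = 0) (hlsn : l ⬝ᵥ s ⨯₃ n = 1) (hml : m ⨯₃ l ≠ 0)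
    (hmn : m ⬝ᵥ l ⨯₃ n = 0) (hm : lin m ∣ (C ∘ m : Fin 3 → P3) ⬝ᵥ Z) :
    lin m ∣ (C ∘ n : Fin 3 → P3) ⬝ᵥ Z := by
  have hm_eq : m = (m ⬝ᵥ s ⨯₃ n) • l + (m ⬝ᵥ l ⨯₃ s) • n := by
    have h := triple_product_smul_eq l s n m
    rwa [hlsn, one_smul, ← cross_anticomm l n, dotProduct_neg, hmn, neg_zero, zero_smul,
      add_zero] at h
  have hms : m ⬝ᵥ l ⨯₃ s ≠ 0 := by
    intro h
    rw [h, zero_smul, add_zero] at hm_eq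
    rw [hm_eq] at hml
    simp at hml
  have hmZ : (C ∘ m) ⬝ᵥ Z = C (m ⬝ᵥ l ⨯₃ s) * ((C ∘ n) ⬝ᵥ Z) := by
    have hC : (C ∘ m : Fin 3 → P3) =
        (C (m ⬝ᵥ s ⨯₃ n) : P3) • (C ∘ l) + (C (m ⬝ᵥ l ⨯₃ s) : P3) • (C ∘ n) := by
      conv_lhs => rw [hm_eq]
      ext i : 1
      simp
    rw [hC, add_dotProduct, smul_dotProduct, smul_dotProduct, hZ, smul_zero, zero_add, smul_eq_mul]
  rwa [hmZ, ((isUnit_iff_ne_zero.2 hms).map C).dvd_mul_left] at hm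

lemma eval_alongLine_lin (m : Fin 3 → ℂ) (r : ℂ) :
    (alongLine (l ⨯₃ u) (l ⨯₃ s) (lin m)).eval r = m ⬝ᵥ l ⨯₃ (u + r • s) := by
  rw [eval_alongLine, aeval_eq_eval]
  simpa using eval_lin (l ⨯₃ u + r • l ⨯₃ s) m

lemma alongLine_lin_ne_zero (hlsu : l ⬝ᵥ s ⨯₃ u = 1) {m : Fin 3 → ℂ} (hml : m ⨯₃ l ≠ 0) :
    alongLine (l ⨯₃ u) (l ⨯₃ s) (lin m) ≠ 0 := by
  intro h
  have hr (r : ℂ) : m ⬝ᵥ l ⨯₃ (u + r • s) = 0 := by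
    rw [← eval_alongLine_lin, h, Polynomial.eval_zero]
  have h₀ := hr 0
  have h₁ := hr 1
  rw [zero_smul, add_zero] at h₀
  rw [one_smul, map_add, dotProduct_add, h₀, zero_add] at h₁
  have hm := triple_product_smul_eq l s u m
  rw [hlsu, one_smul, h₁, ← cross_anticomm l u, dotProduct_neg, h₀, neg_zero, zero_smul, zero_smul,
    add_zero, add_zero] at hm
  rw [hm] at hml
  simp at hml

variable {ι : Type*} {t : Finset ι} {L : ι → Fin 3 → ℂ} {H : P3}

lemma natDegree_alongLine_lin_le (x v m : Fin 3 → ℂ) : (alongLine x v (lin m)).natDegree ≤ 1 :=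
  (natDegree_alongLine_le _ _ _).trans (isHomogeneous_lin m).totalDegree_le

lemma X_sub_C_pow_dvd_alongLine (hZ : IsTangentField d l Z) (hlsu : l ⬝ᵥ s ⨯₃ u = 1)
    (hLl : ∀ i ∈ t, L i ⨯₃ l ≠ 0) (hL : (t : Set ι).Pairwise fun i j ↦ L i ⨯₃ L j ≠ 0)
    (hLZ : ∀ i ∈ t, lin (L i) ∣ (C ∘ L i : Fin 3 → P3) ⬝ᵥ Z) {r : ℂ}
    (hr : ∀ i ∈ t, L i ⬝ᵥ l ⨯₃ (u + r • s) = 0) :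
    (Polynomial.X - Polynomial.C r) ^ t.card ∣
      alongLine (l ⨯₃ u) (l ⨯₃ s) ((C ∘ (u + r • s)) ⬝ᵥ Z) := by
  have hlsn : l ⬝ᵥ s ⨯₃ (u + r • s) = 1 := by
    rw [map_add, map_smul, cross_self, smul_zero, add_zero, hlsu]
  have hprod : ∏ i ∈ t, lin (L i) ∣ (C ∘ (u + r • s) : Fin 3 → P3) ⬝ᵥ Z :=
    Finset.prod_dvd_of_isRelPrime (fun i hi j hj hij ↦ isRelPrime_lin (hL hi hj hij)) fun i hi ↦
      lin_dvd_dotProduct_of_dotProduct_cross_eq_zero hZ.dot_eq_zero hlsn (hLl i hi) (hr i hi)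
        (hLZ i hi)
  refine dvd_trans ?_ (map_dvd (alongLine (l ⨯₃ u) (l ⨯₃ s)) hprod)
  rw [map_prod, ← Finset.prod_const]
  refine Finset.prod_dvd_prod_of_dvd _ _ fun i hi ↦ ?_
  rw [Polynomial.dvd_iff_isRoot, Polynomial.IsRoot, eval_alongLine_lin, hr i hi]

lemma not_X_sub_C_sq_dvd_singularityPoly (hZ : IsTangentField d l Z) (hlsu : l ⬝ᵥ s ⨯₃ u = 1)
    (hLl : ∀ i ∈ t, L i ⨯₃ l ≠ 0) (hL : (t : Set ι).Pairwise fun i j ↦ L i ⨯₃ L j ≠ 0)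
    (hLZ : ∀ i ∈ t, lin (L i) ∣ (C ∘ L i : Fin 3 → P3) ⬝ᵥ Z)
    (hH : Z ⨯₃ acceleration Z = H • (C ∘ l)) (hHL : H ∣ ∏ i ∈ t, lin (L i)) (r : ℂ) :
    ¬ (Polynomial.X - Polynomial.C r) ^ 2 ∣ singularityPoly l s u Z := by
  classical
  intro hr
  set ρ : P3 →ₐ[ℂ] ℂ[X] := alongLine (l ⨯₃ u) (l ⨯₃ s)
  set T := {i ∈ t | (ρ (lin (L i))).IsRoot r}
  have hTt : T ⊆ t := Finset.filter_subset _ _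
  have hT : (Polynomial.X - Polynomial.C r) ^ T.card ∣ ρ ((C ∘ (u + r • s)) ⬝ᵥ Z) :=
    X_sub_C_pow_dvd_alongLine hZ hlsu (fun i hi ↦ hLl i (hTt hi)) (hL.mono (mod_cast hTt))
      (fun i hi ↦ hLZ i (hTt hi)) fun i hi ↦ by
        rw [← eval_alongLine_lin]
        exact (Finset.mem_filter.1 hi).2
  have hC : (C ∘ (u + r • s) : Fin 3 → P3) = C ∘ u + (r • (C ∘ s) : Fin 3 → P3) := by
    ext i : 1
    simp [smul_eq_C_mul]
  rw [hC, add_dotProduct, smul_dotProduct, map_add, map_smul] at hT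
  have hdvd : (Polynomial.X - Polynomial.C r) ^ (T.card + 1) ∣ ∏ i ∈ t, ρ (lin (L i)) := by
    rw [← map_prod]
    refine dvd_trans ?_ (map_dvd ρ hHL)
    rw [hZ.alongLine_eq_mul_wronskian hlsu hH, ← wronskian_add_smul_self _ _ r]
    exact pow_succ_dvd_mul_wronskian hT hr
  exact (le_card_filter_isRoot_of_pow_dvd_prod
    (fun i hi ↦ alongLine_lin_ne_zero hlsu (hLl i hi))
    (fun i _ ↦ natDegree_alongLine_lin_le _ _ _) hdvd).not_gt T.card.lt_succ_self

end SimpleZeros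

section SingularPoints

variable {d : ℕ} {a b c : P3} {l s u : Fin 3 → ℂ} {Z : Fin 3 → P3}

lemma IsTangentField.card_toFinset_roots_singularityPoly {ι : Type*} {t : Finset ι}
    {L : ι → Fin 3 → ℂ} (hZ : IsTangentField d l Z) (hd : 1 ≤ d) (hlsu : l ⬝ᵥ s ⨯₃ u = 1)
    (hs : s ⬝ᵥ (eval (l ⨯₃ s) ∘ Z) ≠ 0) (hLl : ∀ i ∈ t, L i ⨯₃ l ≠ 0)
    (hL : (t : Set ι).Pairwise fun i j ↦ L i ⨯₃ L j ≠ 0)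
    (hLZ : ∀ i ∈ t, lin (L i) ∣ (C ∘ L i : Fin 3 → P3) ⬝ᵥ Z) (ht : t.card = d + (d - 1 + d)) :
    (singularityPoly l s u Z).roots.toFinset.card = d + 1 := by
  classical
  have hl : l ≠ 0 := by
    rintro rfl
    simp at hlsu
  obtain ⟨H, hH_hom, hH⟩ := hZ.exists_cross_acceleration_eq_smul hl
  have hH₀ : H ≠ 0 := by
    rintro rfl
    exact hZ.cross_acceleration_ne_zero hd hlsu hs (hH.trans (zero_smul _ _))
  have hHL : H ∣ ∏ i ∈ t, lin (L i) := dvd_prod_lin hL (ht ▸ hH_hom) hH₀ fun i hi ↦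
    lin_dvd_of_cross_acceleration_eq_smul hH (hLl i hi) (hLZ i hi)
  have hdeg := natDegree_singularityPoly (u := u) hZ.isHomogeneous hs
  have hφ : singularityPoly l s u Z ≠ 0 := by
    intro h
    simp [h] at hdeg
  have hnodup : (singularityPoly l s u Z).roots.Nodup := by
    refine Multiset.nodup_iff_count_le_one.2 fun r ↦ Nat.le_of_lt_succ (not_le.1 ?_)
    rw [Polynomial.count_roots, Polynomial.le_rootMultiplicity_iff hφ]
    exact not_X_sub_C_sq_dvd_singularityPoly hZ hlsu hLl hL hLZ hH hHL r
  rw [Multiset.toFinset_card_of_nodup hnodup, IsAlgClosed.card_roots_eq_natDegree, hdeg]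

lemma onLine_mk_iff {v : Fin 3 → ℂ} (hv : v ≠ 0) :
    OnLine l (Projectivization.mk ℂ v hv) ↔ l ⬝ᵥ v = 0 := by
  obtain ⟨a, ha⟩ := Projectivization.exists_smul_eq_mk_rep ℂ v hv
  rw [OnLine, ← ha]
  exact (Eq.congr_left (dotProduct_smul a l v)).trans (smul_eq_zero_iff_eq a)

lemma eval_comp_vecCons_eq_zero_iff {v : Fin 3 → ℂ} :
    eval v ∘ ![a, b, c] = 0 ↔ eval v a = 0 ∧ eval v b = 0 ∧ eval v c = 0 := by
  simp [funext_iff, Fin.forall_fin_succ]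

lemma isSingOn_mk_iff (hfol : IsFoliation d a b c) {v : Fin 3 → ℂ} (hv : v ≠ 0) :
    IsSingOn a b c (Projectivization.mk ℂ v hv) ↔ eval v ∘ ![a, b, c] = 0 := by
  obtain ⟨ha, hb, hc, -, -⟩ := hfol
  obtain ⟨r, hr⟩ := Projectivization.exists_smul_eq_mk_rep ℂ v hv
  have heval {f : P3} (hf : f.IsHomogeneous (d + 1)) : eval (r • v) f = 0 ↔ eval v f = 0 := by
    rw [Units.smul_def, ← aeval_eq_eval, aeval_smul_of_isHomogeneous hf, aeval_eq_eval, mul_eq_zero,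
      or_iff_right (pow_ne_zero _ r.ne_zero)]
  rw [IsSingOn, ← hr, heval ha, heval hb, heval hc, eval_comp_vecCons_eq_zero_iff]

/-- The point with affine coordinate `r` on the line `l`, in the chart given by a basis `l`, `s`,
`u`; the only point of the line outside the chart is `l ⨯₃ s`. -/
def linePoint (hlsu : l ⬝ᵥ s ⨯₃ u = 1) (r : ℂ) : PP2 :=
  Projectivization.mk ℂ (l ⨯₃ (u + r • s)) (cross_add_smul_ne_zero_of_triple_product_eq_one hlsu r)

variable (hlsu : l ⬝ᵥ s ⨯₃ u = 1)

lemma linePoint_injective : Function.Injective (linePoint hlsu) := by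
  intro r r' h
  obtain ⟨a, ha⟩ := (Projectivization.mk_eq_mk_iff' ..).1 h
  have hs := congrArg (s ⬝ᵥ ·) ha
  have hu := congrArg (u ⬝ᵥ ·) ha
  have husl : s ⬝ᵥ l ⨯₃ u = -1 := by
    rw [← cross_anticomm u l, dotProduct_neg, triple_product_permutation,
      triple_product_permutation, hlsu]
  have hsul : u ⬝ᵥ l ⨯₃ s = 1 := by rw [triple_product_permutation, hlsu]
  simp only [map_add, map_smul, dotProduct_smul, dotProduct_add, dot_cross_self, husl, hsul,
    smul_eq_mul] at hs hu
  grind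

lemma onLine_linePoint (r : ℂ) : OnLine l (linePoint hlsu r) :=
  (onLine_mk_iff _).2 (dot_self_cross _ _)

lemma isSingOn_mk_cross_iff (hfol : IsFoliation d a b c) (hl : l ≠ 0)
    (hZ : (C ∘ l : Fin 3 → P3) ⬝ᵥ Z = 0) (hw : X ⨯₃ Z = ![a, b, c]) {n : Fin 3 → ℂ}
    (hn : l ⨯₃ n ≠ 0) :
    IsSingOn a b c (Projectivization.mk ℂ (l ⨯₃ n) hn) ↔ n ⬝ᵥ (eval (l ⨯₃ n) ∘ Z) = 0 := by
  rw [isSingOn_mk_iff hfol, ← hw, eval_cross_of_dotProduct_eq_zero hZ, smul_eq_zero,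
    or_iff_left hl, neg_eq_zero]

lemma exists_linePoint_eq {p : PP2} (hp : OnLine l p)
    (hps : p ≠ Projectivization.mk ℂ (l ⨯₃ s) (cross_ne_zero_of_triple_product_eq_one hlsu)) :
    ∃ r, linePoint hlsu r = p := by
  induction p using Projectivization.ind with | h v hv => ?_
  rw [onLine_mk_iff] at hp
  have hsv : s ⬝ᵥ v ≠ 0 := by
    intro hsv
    have h := triple_product_smul_eq' l s u v
    rw [hlsu, one_smul, hp, hsv, zero_smul, zero_smul, zero_add, zero_add] at h
    exact hps ((Projectivization.mk_eq_mk_iff' ..).2 ⟨_, h.symm⟩)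
  have hr : (u + (-(u ⬝ᵥ v) / (s ⬝ᵥ v)) • s) ⬝ᵥ v = 0 := by
    rw [add_dotProduct, smul_dotProduct, smul_eq_mul, div_mul_cancel₀ _ hsv, add_neg_cancel]
  exact ⟨_, ((Projectivization.mk_eq_mk_iff' ..).2
    ⟨_, (eq_smul_cross_of_dotProduct_eq_zero hlsu hp hr).symm⟩).symm⟩

lemma mem_map_linePoint_iff (hfol : IsFoliation d a b c) (hl : l ≠ 0)
    (hZ : IsTangentField d l Z) (hw : X ⨯₃ Z = ![a, b, c]) (hs : s ⬝ᵥ (eval (l ⨯₃ s) ∘ Z) ≠ 0)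
    {p : PP2} : p ∈ (singularityPoly l s u Z).roots.toFinset.map
      ⟨linePoint hlsu, linePoint_injective hlsu⟩ ↔
      IsSingOn a b c p ∧ OnLine l p := by
  have hφ : singularityPoly l s u Z ≠ 0 := by
    intro h
    simpa [h] using natDegree_singularityPoly (u := u) hZ.isHomogeneous hs
  have hmem (r : ℂ) : r ∈ (singularityPoly l s u Z).roots.toFinset ↔
      IsSingOn a b c (linePoint hlsu r) := by
    rw [Multiset.mem_toFinset, Polynomial.mem_roots hφ, Polynomial.IsRoot, eval_singularityPoly,
      linePoint, isSingOn_mk_cross_iff hfol hl hZ.dot_eq_zero hw]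
  simp only [Finset.mem_map, Function.Embedding.coeFn_mk, hmem]
  constructor
  · rintro ⟨r, hr, rfl⟩
    exact ⟨hr, onLine_linePoint hlsu r⟩
  · rintro ⟨hsing, hline⟩
    obtain ⟨r, rfl⟩ := exists_linePoint_eq hlsu hline fun h ↦
      hs ((isSingOn_mk_cross_iff hfol hl hZ.dot_eq_zero hw _).1 (h ▸ hsing))
    exact ⟨r, hsing, rfl⟩

lemma exists_finset_isSingOn_onLine_card_eq {ι : Type*} {t : Finset ι} {L : ι → Fin 3 → ℂ}
    (hd : 1 ≤ d) (hfol : IsFoliation d a b c) (hl : InvLine a b c l)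
    (hinv : ∀ i ∈ t, InvLine a b c (L i)) (hLl : ∀ i ∈ t, L i ⨯₃ l ≠ 0)
    (hL : (t : Set ι).Pairwise fun i j ↦ L i ⨯₃ L j ≠ 0) (ht : t.card = 3 * d - 1) :
    ∃ S : Finset PP2, (∀ p, p ∈ S ↔ IsSingOn a b c p ∧ OnLine l p) ∧ S.card = d + 1 := by
  classical
  obtain ⟨Z, hZ, hw⟩ := exists_isTangentField hfol hl
  obtain ⟨s, u, hlsu, hs⟩ := hZ.exists_frame hl.1
  have hroots : (singularityPoly l s u Z).roots.toFinset.card = d + 1 :=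
    hZ.card_toFinset_roots_singularityPoly hd hlsu hs hLl hL
      (fun i hi ↦ lin_dvd_dotProduct_of_invLine (hLl i hi) hw (hinv i hi)) (by omega)
  refine ⟨_, fun p ↦ mem_map_linePoint_iff hlsu hfol hl.1 hZ hw hs, ?_⟩
  rw [Finset.card_map, hroots]

end SingularPoints

section Incidence

variable {a b c : P3} {l m : Fin 3 → ℂ}

lemma existsUnique_onLine (hml : m ⨯₃ l ≠ 0) : ∃! p, OnLine m p ∧ OnLine l p := by
  refine ⟨Projectivization.mk ℂ (m ⨯₃ l) hml, ⟨?_, ?_⟩, ?_⟩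
  · exact (onLine_mk_iff hml).2 (dot_self_cross m l)
  · exact (onLine_mk_iff hml).2 (dot_cross_self m l)
  · rintro p ⟨hm, hl⟩
    induction p using Projectivization.ind with | h v hv => ?_
    rw [onLine_mk_iff] at hm hl
    rw [Projectivization.mk_eq_mk_iff_crossProduct_eq_zero, cross_cross_eq_smul_sub_smul',
      dotProduct_comm, hl, hm]
    simp

lemma isSingOn_of_onLine (hm : InvLine a b c m) (hl : InvLine a b c l) (hml : m ⨯₃ l ≠ 0)
    {p : PP2} (hmp : OnLine m p) (hlp : OnLine l p) : IsSingOn a b c p := by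
  set w := eval p.rep ∘ ![a, b, c] with hw_def
  have hcross {n : Fin 3 → ℂ} (hn : InvLine a b c n) (hnp : OnLine n p) : w ⨯₃ n = 0 := by
    have hnp : n ⬝ᵥ p.rep = 0 := hnp
    rw [hw_def, ← eval_comp_C p.rep n, ← map_crossProduct]
    ext i
    have h := map_dvd (eval p.rep) (lin_dvd_cross_of_invLine hn i)
    rwa [eval_lin, hnp, zero_dvd_iff] at h
  refine eval_comp_vecCons_eq_zero_iff.1 (by_contra fun hw ↦ hml ?_)
  obtain ⟨e, he⟩ := exists_dotProduct_eq_one hw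
  rw [eq_smul_of_cross_eq_zero he (hcross hm hmp), eq_smul_of_cross_eq_zero he (hcross hl hlp),
    map_smul, map_smul, LinearMap.smul_apply, cross_self, smul_zero, smul_zero]

end Incidence

/-- For a reduced convex foliation `F` of degree `d ≥ 1` and any one of its `3d`
invariant lines `{ℓ = 0}`, there are exactly `d+1` singular points of `F` on that line,
and `Σ_s (σ(F,s) − 1) = 3d − 1`, where `σ(F,s)` is the number of the `3d` invariant
lines through `s`. -/
theorem reduced_convex_sum_sigma
    (d : ℕ) (hd : 1 ≤ d) (a b c : P3) (hfol : IsFoliation d a b c)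
    (L : Fin (3 * d) → (Fin 3 → ℂ))
    (hinv : ∀ i, InvLine a b c (L i))
    (hnp : ∀ i j, i ≠ j → ∀ t : ℂ, L i ≠ t • L j)
    (k : Fin (3 * d)) :
    ∃ S : Finset PP2,
      (∀ p : PP2, p ∈ S ↔ (IsSingOn a b c p ∧ OnLine (L k) p)) ∧
      S.card = d + 1 ∧
      ∑ p ∈ S, (({i : Fin (3 * d) | OnLine (L i) p}.ncard : ℤ) - 1) = 3 * d - 1 := by
  have hL {i j : Fin (3 * d)} (hij : i ≠ j) : L i ⨯₃ L j ≠ 0 :=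
    cross_ne_zero_of_forall_ne_smul (hinv j).1 (hnp i j hij)
  obtain ⟨S, hS, hcard⟩ := exists_finset_isSingOn_onLine_card_eq (t := Finset.univ.erase k) hd hfol
    (hinv k) (fun i _ ↦ hinv i) (fun i hi ↦ hL (Finset.ne_of_mem_erase hi))
    (fun i _ j _ hij ↦ hL hij) (by simp)
  have hmeet : ∀ i ≠ k, ∃! p, p ∈ S ∧ OnLine (L i) p := by
    intro i hi
    refine (existsUnique_congr fun p ↦ ?_).1 (existsUnique_onLine (hL hi))
    rw [hS]
    exact ⟨fun ⟨hip, hkp⟩ ↦ ⟨⟨isSingOn_of_onLine (hinv i) (hinv k) (hL hi) hip hkp, hkp⟩, hip⟩,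
      fun ⟨⟨_, hkp⟩, hip⟩ ↦ ⟨hip, hkp⟩⟩
  refine ⟨S, hS, hcard, ?_⟩
  rw [sum_ncard_sub_one_eq_card_sub_one (r := fun i p ↦ OnLine (L i) p)
    (fun p hp ↦ ((hS p).1 hp).2) hmeet]
  simp
end
end
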